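/- arXiv:2106.01281 — 2 statements merged into one kernel-verified Lean document; each statement's English description precedes it below -/
import Mathlib

section
/- For all X ∈ X and Y ∈ X* such that both X and Y are nonconstant, the strict inequalities ∫_0^1 q_X(1−s)q_Y(s) ds < E[X]·E[Y] < ∫_0^1 q_X(s)q_Y(s) ds hold. -/
/-!
The idea is Chebyshev's association inequality. Quantile functions are nondecreasing on `(0, 1)` and
push Lebesgue measure forward to the laws of `X` and `Y`; in particular they have the right means and
are nonconstant. Integrating `(q_X s - q_X t) * (q_Y s - q_Y t) ≥ 0` over the unit square gives
`2 * (∫ q_X q_Y - E[X] E[Y])`, and the integrand is positive on a rectangle near the corner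
`(0, 1)`, so the difference is positive (`integral_mul_integral_lt_of_monotoneOn`). The lower bound
is the same inequality for the nondecreasing function `s ↦ -q_X (1 - s)`.

The products must be shown integrable (`PairedSpaces.integrableOn_mul`), and this is where
atomlessness and law invariance enter. An atomless space carries a uniform random variable `U`
(`IsAtomless.exists_uniform`, built from Sierpiński's theorem on the values of atomless measures).
Then `q_X ∘ U` and `q_X ∘ (1 - U)` have the law of `X`, and `q_Y ∘ U` has the law of `Y`, so they lie
in the paired spaces and their products are integrable on `Ω`.
-/

open MeasureTheory Set List
open scoped ENNReal NNReal

noncomputable section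

namespace Collapse

variable {Ω : Type*} [MeasurableSpace Ω]

/-- A measure is atomless (nonatomic) if every set of positive measure contains a
measurable subset of strictly smaller positive measure. -/
def IsAtomless (P : Measure Ω) : Prop :=
  ∀ A : Set Ω, MeasurableSet A → 0 < P A →
    ∃ B : Set Ω, MeasurableSet B ∧ B ⊆ A ∧ 0 < P B ∧ P B < P A

/-- `X` and `Y` have the same law under `P`. -/
def SameLaw (P : Measure Ω) (X Y : Ω → ℝ) : Prop :=
  Measure.map X P = Measure.map Y P

/-- `X` is not `P`-a.s. equal to a constant. -/
def Nonconstant (P : Measure Ω) (X : Ω → ℝ) : Prop :=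
  ∀ c : ℝ, ¬ X =ᵐ[P] (fun _ => c)

/-- `X` and `Y` are comonotone:
`P(X ≤ x, Y ≤ y) = min (P(X ≤ x)) (P(Y ≤ y))` for all `x y`. -/
def Comonotone (P : Measure Ω) (X Y : Ω → ℝ) : Prop :=
  ∀ x y : ℝ,
    P ({ω | X ω ≤ x} ∩ {ω | Y ω ≤ y}) = min (P {ω | X ω ≤ x}) (P {ω | Y ω ≤ y})

/-- `X` and `Y` are antimonotone:
`P(X ≤ x, Y ≤ y) = max (P(X ≤ x) + P(Y ≤ y) - 1) 0` for all `x y`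
(in `ℝ≥0∞`, truncated subtraction realises the `max` with `0`). -/
def Antimonotone (P : Measure Ω) (X Y : Ω → ℝ) : Prop :=
  ∀ x y : ℝ,
    P ({ω | X ω ≤ x} ∩ {ω | Y ω ≤ y}) = (P {ω | X ω ≤ x} + P {ω | Y ω ≤ y}) - 1

/-- `q` is a quantile function of `X` under `P`. -/
def IsQuantile (P : Measure Ω) (X : Ω → ℝ) (q : ℝ → ℝ) : Prop :=
  ∀ s ∈ Set.Ioo (0:ℝ) 1,
    sInf {x : ℝ | s ≤ (P {ω | X ω ≤ x}).toReal} ≤ q s ∧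
    q s ≤ sInf {x : ℝ | s < (P {ω | X ω ≤ x}).toReal}

/-- `X` belongs to `L^∞(P)`: measurable and essentially bounded. -/
def MemLinf (P : Measure Ω) (X : Ω → ℝ) : Prop :=
  Measurable X ∧ ∃ M : ℝ, ∀ᵐ ω ∂P, |X ω| ≤ M

/-- A pair `(𝒳, 𝒳*)` of law-invariant vector subspaces of `L¹(P)` containing `L^∞(P)`
such that `X * Y ∈ L¹(P)` for all `X ∈ 𝒳`, `Y ∈ 𝒳*` (Assumption 2.1). -/
structure PairedSpaces (P : Measure Ω) where
  carrier : Set (Ω → ℝ)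
  dual : Set (Ω → ℝ)
  meas_carrier : ∀ X ∈ carrier, Measurable X
  meas_dual : ∀ Y ∈ dual, Measurable Y
  int_carrier : ∀ X ∈ carrier, Integrable X P
  int_dual : ∀ Y ∈ dual, Integrable Y P
  smul_carrier : ∀ X ∈ carrier, ∀ c : ℝ, (fun ω => c * X ω) ∈ carrier
  add_carrier : ∀ X ∈ carrier, ∀ X' ∈ carrier, (fun ω => X ω + X' ω) ∈ carrier
  smul_dual : ∀ Y ∈ dual, ∀ c : ℝ, (fun ω => c * Y ω) ∈ dual
  add_dual : ∀ Y ∈ dual, ∀ Y' ∈ dual, (fun ω => Y ω + Y' ω) ∈ dual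
  linf_carrier : ∀ X : Ω → ℝ, MemLinf P X → X ∈ carrier
  linf_dual : ∀ Y : Ω → ℝ, MemLinf P Y → Y ∈ dual
  lawinv_carrier : ∀ X ∈ carrier, ∀ X' : Ω → ℝ, Measurable X' → SameLaw P X' X → X' ∈ carrier
  lawinv_dual : ∀ Y ∈ dual, ∀ Y' : Ω → ℝ, Measurable Y' → SameLaw P Y' Y → Y' ∈ dual
  mul_int : ∀ X ∈ carrier, ∀ Y ∈ dual, Integrable (fun ω => X ω * Y ω) P

/-- A subset `C` of `𝒳` is closed in the weak topology `σ(𝒳, 𝒳*)`, i.e. the topology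
on `𝒳` induced by the linear functionals `X ↦ E[X Y]`, `Y ∈ 𝒳*`. -/
def WeakClosed (P : Measure Ω) (pr : PairedSpaces P) (C : Set (Ω → ℝ)) : Prop :=
  @IsClosed ↥pr.carrier
    (TopologicalSpace.induced
      (fun X : ↥pr.carrier => (fun Y : ↥pr.dual => ∫ ω, (X : Ω → ℝ) ω * (Y : Ω → ℝ) ω ∂P))
      Pi.topologicalSpace)
    {X : ↥pr.carrier | (X : Ω → ℝ) ∈ C}

/-- `φ` is `σ(𝒳, 𝒳*)`-lower semicontinuous: every sublevel set is `σ(𝒳, 𝒳*)`-closed. -/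
def WeakLSC (P : Measure Ω) (pr : PairedSpaces P) (φ : (Ω → ℝ) → EReal) : Prop :=
  ∀ m : ℝ, WeakClosed P pr {X | X ∈ pr.carrier ∧ φ X ≤ (m : EReal)}

/-- The (upper) support functional `σ_C(Y) = sup_{X ∈ C} E[XY]`. -/
def suppFn (P : Measure Ω) (C : Set (Ω → ℝ)) (Y : Ω → ℝ) : EReal :=
  ⨆ X ∈ C, ((∫ ω, X ω * Y ω ∂P : ℝ) : EReal)

/-- The conjugate functional `φ*(Y) = sup_{X ∈ 𝒳} (E[XY] - φ(X))`. -/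
def conj (P : Measure Ω) (𝒳 : Set (Ω → ℝ)) (φ : (Ω → ℝ) → EReal) (Y : Ω → ℝ) : EReal :=
  ⨆ X ∈ 𝒳, (((∫ ω, X ω * Y ω ∂P : ℝ) : EReal) - φ X)

/-- The recession cone `C^∞ = {X ∈ 𝒳 : {X} + C ⊆ C}`. -/
def recCone (𝒳 C : Set (Ω → ℝ)) : Set (Ω → ℝ) :=
  {X | X ∈ 𝒳 ∧ ∀ U ∈ C, (fun ω => X ω + U ω) ∈ C}

/-- A functional on `𝒳` is law invariant. -/
def LawInvariantFn (P : Measure Ω) (𝒳 : Set (Ω → ℝ)) (φ : (Ω → ℝ) → EReal) : Prop :=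
  ∀ X ∈ 𝒳, ∀ Y ∈ 𝒳, SameLaw P X Y → φ X = φ Y

/-- A set of random variables is law invariant. -/
def LawInvariantSet (P : Measure Ω) (C : Set (Ω → ℝ)) : Prop :=
  ∀ X ∈ C, ∀ Y : Ω → ℝ, Measurable Y → SameLaw P Y X → Y ∈ C

/-- A functional on `𝒳` is expectation invariant. -/
def ExpectationInvariantFn (P : Measure Ω) (𝒳 : Set (Ω → ℝ)) (φ : (Ω → ℝ) → EReal) : Prop :=
  ∀ X ∈ 𝒳, ∀ Y ∈ 𝒳, (∫ ω, X ω ∂P) = (∫ ω, Y ω ∂P) → φ X = φ Y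

/-- Convexity of a functional `φ : 𝒳 → (-∞, ∞]`. -/
def ConvexFn (𝒳 : Set (Ω → ℝ)) (φ : (Ω → ℝ) → EReal) : Prop :=
  ∀ X ∈ 𝒳, ∀ Y ∈ 𝒳, ∀ l : ℝ, l ∈ Set.Icc (0:ℝ) 1 →
    φ (fun ω => l * X ω + (1 - l) * Y ω) ≤ (l : EReal) * φ X + ((1 - l : ℝ) : EReal) * φ Y

/-- Quasiconvexity of a functional `φ : 𝒳 → (-∞, ∞]`. -/
def QuasiconvexFn (𝒳 : Set (Ω → ℝ)) (φ : (Ω → ℝ) → EReal) : Prop :=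
  ∀ X ∈ 𝒳, ∀ Y ∈ 𝒳, ∀ l : ℝ, l ∈ Set.Icc (0:ℝ) 1 →
    φ (fun ω => l * X ω + (1 - l) * Y ω) ≤ max (φ X) (φ Y)

/-- Convexity of a set of random variables. -/
def ConvexSet (C : Set (Ω → ℝ)) : Prop :=
  ∀ X ∈ C, ∀ Y ∈ C, ∀ l : ℝ, l ∈ Set.Icc (0:ℝ) 1 →
    (fun ω => l * X ω + (1 - l) * Y ω) ∈ C

/-- The expectation of `Z` as an extended real number,
`E[Z] = ∫ Z⁺ dP - ∫ Z⁻ dP` computed in `EReal`. -/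
def eExp (P : Measure Ω) (Z : Ω → ℝ) : EReal :=
  ((∫⁻ ω, ENNReal.ofReal (Z ω) ∂P : ℝ≥0∞) : EReal) -
    ((∫⁻ ω, ENNReal.ofReal (-(Z ω)) ∂P : ℝ≥0∞) : EReal)

/-- `X` dominates `Y` in the increasing convex (second-order stochastic dominance) sense:
`E[f(X)] ≥ E[f(Y)]` for every nondecreasing convex `f : ℝ → ℝ`. -/
def SSDdom (P : Measure Ω) (X Y : Ω → ℝ) : Prop :=
  ∀ f : ℝ → ℝ, Monotone f → ConvexOn ℝ Set.univ f →
    eExp P (fun ω => f (Y ω)) ≤ eExp P (fun ω => f (X ω))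

/-- A consistent risk measure on `𝒳`: a proper, cash-additive, normalised functional
that is consistent with second-order stochastic dominance. -/
def IsConsistentRM (P : Measure Ω) (𝒳 : Set (Ω → ℝ)) (φ : (Ω → ℝ) → EReal) : Prop :=
  (∀ X ∈ 𝒳, φ X ≠ (⊥ : EReal)) ∧
  (∃ X ∈ 𝒳, φ X ≠ (⊤ : EReal)) ∧
  (∀ X ∈ 𝒳, ∀ m : ℝ, φ (fun ω => X ω + m) = φ X + (m : EReal)) ∧
  (∀ X ∈ 𝒳, ∀ Y ∈ 𝒳, SSDdom P X Y → φ Y ≤ φ X) ∧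
  φ (fun _ => (0:ℝ)) = (0 : EReal)

/-- A capacity on `(Ω, F)`. -/
structure Capacity (Ω : Type*) [MeasurableSpace Ω] where
  toFun : Set Ω → ℝ
  empty' : toFun ∅ = 0
  univ' : toFun Set.univ = 1
  mono' : ∀ ⦃A B : Set Ω⦄, MeasurableSet A → MeasurableSet B → A ⊆ B → toFun A ≤ toFun B
  nonneg' : ∀ A : Set Ω, MeasurableSet A → 0 ≤ toFun A
  le_one' : ∀ A : Set Ω, MeasurableSet A → toFun A ≤ 1

/-- A capacity is coherent if it is the upper envelope of a family of probability measures. -/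
def Capacity.Coherent (ν : Capacity Ω) : Prop :=
  ∃ Q : Set (Measure Ω), Q.Nonempty ∧ (∀ m ∈ Q, IsProbabilityMeasure m) ∧
    ∀ A : Set Ω, MeasurableSet A → ν.toFun A = ⨆ m ∈ Q, (m A).toReal

/-- A capacity is law invariant (with respect to `P`). -/
def Capacity.LawInvariant (P : Measure Ω) (μ : Capacity Ω) : Prop :=
  ∀ A B : Set Ω, MeasurableSet A → MeasurableSet B → P A = P B → μ.toFun A = μ.toFun B

/-- `μ` is the Jaffray-Philippe capacity represented by the pair `(ν, α)`:
`μ = α ν + (1 - α) ν̄` with `ν` coherent and `α ∈ [0,1]`,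
where `ν̄(A) = 1 - ν(Aᶜ)` is the dual capacity. -/
def IsJPRep (μ ν : Capacity Ω) (α : ℝ) : Prop :=
  ν.Coherent ∧ α ∈ Set.Icc (0:ℝ) 1 ∧
    ∀ A : Set Ω, MeasurableSet A → μ.toFun A = α * ν.toFun A + (1 - α) * (1 - ν.toFun Aᶜ)

/-- The Choquet integral `E_μ[X] = ∫_{-∞}^0 (μ(X > s) - 1) ds + ∫_0^∞ μ(X > s) ds`. -/
def choquet (μ : Capacity Ω) (X : Ω → ℝ) : ℝ :=
  (∫ s in Set.Iio (0:ℝ), (μ.toFun {ω | s < X ω} - 1)) +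
    ∫ s in Set.Ici (0:ℝ), μ.toFun {ω | s < X ω}

/-- `X` is an optimal solution of: maximise `φ` over `C` subject to `E[D X] = p`. -/
def IsOptimal (P : Measure Ω) (φ : (Ω → ℝ) → EReal) (C : Set (Ω → ℝ)) (D : Ω → ℝ)
    (p : ℝ) (X : Ω → ℝ) : Prop :=
  X ∈ C ∧ (∫ ω, D ω * X ω ∂P) = p ∧
    ∀ X' ∈ C, (∫ ω, D ω * X' ω ∂P) = p → φ X' ≤ φ X

/-- A set of random variables is increasing. -/
def IncreasingSet (C : Set (Ω → ℝ)) : Prop :=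
  ∀ X ∈ C, ∀ m : ℝ, 0 ≤ m → (fun ω => X ω + m) ∈ C

/-- `φ` is weakly increasing: `φ(X + m) ≥ φ(X)` for `m ≥ 0`. -/
def WeaklyIncreasingFn (𝒳 : Set (Ω → ℝ)) (φ : (Ω → ℝ) → EReal) : Prop :=
  ∀ X ∈ 𝒳, ∀ m : ℝ, 0 ≤ m → φ X ≤ φ (fun ω => X ω + m)

/-- `φ` is increasing: `φ(X + m) > φ(X)` whenever `φ(X) ∈ ℝ` and `m > 0`. -/
def IncreasingFn (𝒳 : Set (Ω → ℝ)) (φ : (Ω → ℝ) → EReal) : Prop :=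
  ∀ X ∈ 𝒳, (φ X ≠ (⊤ : EReal) ∧ φ X ≠ (⊥ : EReal)) → ∀ m : ℝ, 0 < m →
    φ X < φ (fun ω => X ω + m)

/-! ### Uniform random variables on atomless spaces -/

/-- Repeatedly splitting a set and keeping the lighter half yields subsets of arbitrarily small
positive measure. -/
lemma IsAtomless.exists_small {P : Measure Ω} [IsProbabilityMeasure P] (hP : IsAtomless P)
    {A : Set Ω} (hA : MeasurableSet A) (hpos : 0 < P.real A) (n : ℕ) :
    ∃ B, MeasurableSet B ∧ B ⊆ A ∧ 0 < P.real B ∧ P.real B ≤ P.real A / 2 ^ n := by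
  induction n with
  | zero => exact ⟨A, hA, subset_rfl, hpos, by simp⟩
  | succ n ih =>
    obtain ⟨B, hB, hBA, hB0, hBn⟩ := ih
    obtain ⟨C, hC, hCB, hC0, hCB'⟩ := hP B hB ((measureReal_ne_zero_iff (measure_ne_top _ _)).1 hB0.ne' |>.bot_lt)
    have h1 : 0 < P.real C := ENNReal.toReal_pos hC0.ne' (measure_ne_top _ _)
    have h2 : P.real C < P.real B :=
      (ENNReal.toReal_lt_toReal (measure_ne_top _ _) (measure_ne_top _ _)).2 hCB'
    have h3 : P.real (B \ C) = P.real B - P.real C := measureReal_sdiff hCB hC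
    have h4 : P.real A / 2 ^ (n + 1) = P.real A / 2 ^ n / 2 := by rw [pow_succ]; field_simp
    rcases le_total (P.real C) (P.real B / 2) with h | h
    · exact ⟨C, hC, hCB.trans hBA, h1, by rw [h4]; linarith⟩
    · exact ⟨B \ C, hB.diff hC, sdiff_subset.trans hBA, by rw [h3]; linarith,
        by rw [h3, h4]; linarith⟩

/-- Sierpiński's theorem: an atomless measure takes all intermediate values on subsets of `A`.
The set is the union of a chain chosen greedily: each step gains at least half of the largest gain
that keeps the measure at most `r`. -/
lemma IsAtomless.exists_measure_eq {P : Measure Ω} [IsProbabilityMeasure P] (hP : IsAtomless P)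
    {A : Set Ω} (hA : MeasurableSet A) {r : ℝ} (hr0 : 0 ≤ r) (hrA : r ≤ P.real A) :
    ∃ B, MeasurableSet B ∧ B ⊆ A ∧ P.real B = r := by
  let S := {C : Set Ω // MeasurableSet C ∧ C ⊆ A ∧ P.real C ≤ r}
  have step : ∀ C : S, ∃ C' : S, C.1 ⊆ C'.1 ∧ ∀ D : S, C.1 ⊆ D.1 →
      P.real D.1 - P.real C.1 ≤ 2 * (P.real C'.1 - P.real C.1) := by
    intro C
    let T : Set ℝ := (fun D : S => P.real D.1) '' {D : S | C.1 ⊆ D.1}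
    have hTne : T.Nonempty := ⟨_, C, subset_rfl (a := C.1), rfl⟩
    have hTb : BddAbove T := ⟨r, by rintro _ ⟨D, _, rfl⟩; exact D.2.2.2⟩
    have hCs : P.real C.1 ≤ sSup T := le_csSup hTb ⟨C, subset_rfl (a := C.1), rfl⟩
    rcases hCs.eq_or_lt with h | h
    · refine ⟨C, subset_rfl, fun D hD => ?_⟩
      have : P.real D.1 ≤ sSup T := le_csSup hTb ⟨D, hD, rfl⟩
      linarith
    · obtain ⟨_, ⟨C', hC', rfl⟩, hlt⟩ := exists_lt_of_lt_csSup hTne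
        (show (sSup T + P.real C.1) / 2 < sSup T by linarith)
      refine ⟨C', hC', fun D hD => ?_⟩
      have : P.real D.1 ≤ sSup T := le_csSup hTb ⟨D, hD, rfl⟩
      simp only at hlt
      linarith
  choose nxt hsub hmax using step
  let C : ℕ → S := fun n => nxt^[n] ⟨∅, MeasurableSet.empty, empty_subset _, by simpa using hr0⟩
  have hCs : ∀ n, C (n + 1) = nxt (C n) := fun n => Function.iterate_succ_apply' _ _ _
  have hmono : Monotone fun n => (C n).1 :=
    monotone_nat_of_le_succ fun n => by rw [hCs]; exact hsub _
  have hlim : Filter.Tendsto (fun n => P.real (C n).1) Filter.atTop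
      (nhds (P.real (⋃ n, (C n).1))) :=
    (ENNReal.tendsto_toReal (measure_ne_top _ _)).comp (tendsto_measure_iUnion_atTop hmono)
  set L := ⋃ n, (C n).1 with hL
  have hLm : MeasurableSet L := MeasurableSet.iUnion fun n => (C n).2.1
  have hLA : L ⊆ A := iUnion_subset fun n => (C n).2.2.1
  have hLr : P.real L ≤ r := le_of_tendsto' hlim fun n => (C n).2.2.2
  refine ⟨L, hLm, hLA, hLr.antisymm (not_lt.1 fun hlt => ?_)⟩
  have hdiff : P.real (A \ L) = P.real A - P.real L := measureReal_sdiff hLA hLm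
  obtain ⟨n, hn⟩ := exists_pow_lt_of_lt_one (show 0 < r - P.real L by linarith)
    (show (1 / 2 : ℝ) < 1 by norm_num)
  obtain ⟨D, hD, hDA, hD0, hDn⟩ := hP.exists_small (hA.diff hLm) (by rw [hdiff]; linarith) n
  have hDr : P.real D ≤ r - P.real L := by
    refine (hDn.trans ?_).trans hn.le
    rw [one_div, inv_pow, div_eq_mul_inv]
    exact mul_le_of_le_one_left (by positivity) measureReal_le_one
  have hdisj : Disjoint L D := disjoint_sdiff_right.mono_right hDA
  have hun : P.real (L ∪ D) = P.real L + P.real D := measureReal_union hdisj hD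
  -- `L ∪ D` is a competitor at every step, although the gains along the chain tend to `0`.
  have key : ∀ n, P.real L + P.real D - P.real (C n).1
      ≤ 2 * (P.real (C (n + 1)).1 - P.real (C n).1) := by
    intro n
    have := hmax (C n) ⟨L ∪ D, hLm.union hD, union_subset hLA (hDA.trans sdiff_subset),
      by rw [hun]; linarith⟩ ((subset_iUnion (fun n => (C n).1) n).trans subset_union_left)
    rw [hCs]
    simpa only [hun] using this
  have h1 := le_of_tendsto_of_tendsto' (hlim.const_sub (P.real L + P.real D))
    (((hlim.comp (Filter.tendsto_add_atTop_nat 1)).sub hlim).const_mul 2) key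
  linarith

/-- An increasing family of sets indexed by the dyadic numbers `k / 2 ^ n`, with `F n k` of measure
`k / 2 ^ n`; each refinement inserts a set halfway between consecutive ones. -/
lemma IsAtomless.exists_dyadic_chain {P : Measure Ω} [IsProbabilityMeasure P]
    (hP : IsAtomless P) :
    ∃ F : ℕ → ℕ → Set Ω, (∀ n k, MeasurableSet (F n k)) ∧ (∀ n, Monotone (F n)) ∧
      (∀ n k, F (n + 1) (2 * k) = F n k) ∧ F 0 1 = univ ∧
      ∀ n k, k ≤ 2 ^ n → P.real (F n k) = k / 2 ^ n := by
  let S := {F : ℕ → Set Ω // (∀ k, MeasurableSet (F k)) ∧ Monotone F}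
  have step : ∀ F : S, ∃ G : S, (∀ k, G.1 (2 * k) = F.1 k) ∧
      ∀ k, P.real (G.1 (2 * k + 1)) = (P.real (F.1 k) + P.real (F.1 (k + 1))) / 2 := by
    rintro ⟨F, hFm, hF⟩
    have mid : ∀ k, ∃ C, MeasurableSet C ∧ F k ⊆ C ∧ C ⊆ F (k + 1) ∧
        P.real C = (P.real (F k) + P.real (F (k + 1))) / 2 := by
      intro k
      have hsub : F k ⊆ F (k + 1) := hF (Nat.le_succ k)
      have hle : P.real (F k) ≤ P.real (F (k + 1)) := measureReal_mono hsub
      have hd : P.real (F (k + 1) \ F k) = P.real (F (k + 1)) - P.real (F k) :=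
        measureReal_sdiff hsub (hFm k)
      obtain ⟨B, hB, hBs, hBr⟩ := hP.exists_measure_eq ((hFm (k + 1)).diff (hFm k))
        (r := (P.real (F (k + 1)) - P.real (F k)) / 2) (by linarith) (by linarith)
      refine ⟨F k ∪ B, (hFm k).union hB, subset_union_left,
        union_subset hsub (hBs.trans sdiff_subset), ?_⟩
      rw [measureReal_union (disjoint_sdiff_right.mono_right hBs) hB, hBr]
      ring
    choose C hCm hC1 hC2 hC3 using mid
    have hev : ∀ k, (if 2 * k % 2 = 0 then F (2 * k / 2) else C (2 * k / 2)) = F k := by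
      intro k
      rw [if_pos (by omega), show 2 * k / 2 = k by omega]
    have hod : ∀ k, (if (2 * k + 1) % 2 = 0 then F ((2 * k + 1) / 2) else C ((2 * k + 1) / 2))
        = C k := by
      intro k
      rw [if_neg (by omega), show (2 * k + 1) / 2 = k by omega]
    refine ⟨⟨fun j => if j % 2 = 0 then F (j / 2) else C (j / 2), fun k => ?_,
      monotone_nat_of_le_succ fun j => ?_⟩, fun k => hev k, fun k => ?_⟩
    · dsimp only
      split_ifs
      exacts [hFm _, hCm _]
    · obtain ⟨k, rfl | rfl⟩ := Nat.even_or_odd' j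
      · rw [hev, hod]; exact hC1 k
      · rw [hod, show 2 * k + 1 + 1 = 2 * (k + 1) by ring, hev]; exact hC2 k
    · dsimp only
      rw [hod, hC3]
  choose nxt hev hod using step
  let F0 : S := ⟨fun k => if k = 0 then ∅ else univ, fun k => by dsimp only; split_ifs <;> simp,
    monotone_nat_of_le_succ fun k => by simp⟩
  let F : ℕ → S := fun n => nxt^[n] F0
  have hFs : ∀ n, F (n + 1) = nxt (F n) := fun n => Function.iterate_succ_apply' _ _ _
  refine ⟨fun n => (F n).1, fun n => (F n).2.1, fun n => (F n).2.2, fun n k => ?_, ?_, fun n => ?_⟩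
  · dsimp only; rw [hFs, hev]
  · simp [F, F0]
  · induction n with
    | zero =>
      intro k hk
      have : k = 0 ∨ k = 1 := by simp at hk; omega
      rcases this with rfl | rfl <;> simp [F, F0]
    | succ n ih =>
      intro j hj
      rw [pow_succ] at hj
      obtain ⟨k, rfl | rfl⟩ := Nat.even_or_odd' j
      · dsimp only at ih ⊢
        rw [hFs, hev, ih k (by omega), pow_succ]
        push_cast
        field_simp
      · dsimp only at ih ⊢
        rw [hFs, hod, ih k (by omega), ih (k + 1) (by omega), pow_succ]
        push_cast
        field_simp
        ring

/-- An atomless space carries a uniform random variable: `U ω` is the infimum of the dyadic numbers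
`k / 2 ^ n` with `ω ∈ F n k`, for a dyadic chain `F`. -/
lemma IsAtomless.exists_uniform {P : Measure Ω} [IsProbabilityMeasure P] (hP : IsAtomless P) :
    ∃ U : Ω → ℝ, Measurable U ∧ P.map U = volume.restrict (Ioo (0 : ℝ) 1) := by
  obtain ⟨F, hFm, hF, hF2, hF1, hFP⟩ := hP.exists_dyadic_chain
  have hlift : ∀ m n k, F (n + m) (2 ^ m * k) = F n k := by
    intro m n k
    induction m with
    | zero => simp
    | succ m ih => rw [← ih, pow_succ', mul_assoc, ← add_assoc, hF2]
  have hcmp : ∀ n k m j : ℕ, (k : ℝ) / 2 ^ n ≤ j / 2 ^ m → F n k ⊆ F m j := by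
    intro n k m j h
    rw [← hlift m n k, ← hlift n m j, add_comm m n]
    apply hF
    rw [div_le_div_iff₀ (by positivity) (by positivity)] at h
    have : k * 2 ^ m ≤ j * 2 ^ n := by exact_mod_cast h
    linarith
  let T : Ω → Set ℝ := fun ω => {x | ∃ n k : ℕ, x = k / 2 ^ n ∧ ω ∈ F n k}
  have hT1 : ∀ ω, (1 : ℝ) ∈ T ω := fun ω => ⟨0, 1, by simp, by rw [hF1]; trivial⟩
  have hT0 : ∀ ω, ∀ x ∈ T ω, 0 ≤ x := by rintro ω _ ⟨n, k, rfl, _⟩; positivity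
  have hlt : ∀ ω t, sInf (T ω) < t ↔ ∃ n k : ℕ, (k : ℝ) / 2 ^ n < t ∧ ω ∈ F n k := by
    intro ω t
    rw [csInf_lt_iff ⟨0, hT0 ω⟩ ⟨1, hT1 ω⟩]
    constructor
    · rintro ⟨_, ⟨n, k, rfl, h⟩, h'⟩; exact ⟨n, k, h', h⟩
    · rintro ⟨n, k, h', h⟩; exact ⟨_, ⟨n, k, rfl, h⟩, h'⟩
  have hset : ∀ t, (fun ω => sInf (T ω)) ⁻¹' Iio t
      = ⋃ (n : ℕ) (k : ℕ) (_ : (k : ℝ) / 2 ^ n < t), F n k := by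
    intro t
    ext ω
    simp [hlt]
  have hU : Measurable fun ω => sInf (T ω) := by
    apply measurable_of_Iio
    intro t
    rw [hset]
    exact MeasurableSet.iUnion fun n => MeasurableSet.iUnion fun k =>
      MeasurableSet.iUnion fun _ => hFm n k
  refine ⟨_, hU, ?_⟩
  have := Measure.isProbabilityMeasure_map (μ := P) hU.aemeasurable
  have hval : ∀ t, 0 < t → t ≤ 1 → P.real ((fun ω => sInf (T ω)) ⁻¹' Iio t) = t := by
    intro t ht0 ht1
    -- Sandwich `{U < t}` between the chain members at `(c - 1) / 2 ^ n` and `c / 2 ^ n`, where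
    -- `c = ⌈t * 2 ^ n⌉`.
    have hb : ∀ n : ℕ, |P.real ((fun ω => sInf (T ω)) ⁻¹' Iio t) - t| ≤ (1 / 2) ^ n := by
      intro n
      have hp : (0 : ℝ) < 2 ^ n := by positivity
      have hc1 := Nat.ceil_lt_add_one (show 0 ≤ t * 2 ^ n by positivity)
      have hc2 := Nat.le_ceil (t * 2 ^ n)
      have hc3 : 0 < ⌈t * 2 ^ n⌉₊ := Nat.ceil_pos.2 (by positivity)
      have hc4 : ⌈t * 2 ^ n⌉₊ ≤ 2 ^ n := by
        apply Nat.ceil_le.2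
        push_cast
        exact mul_le_of_le_one_left hp.le ht1
      set c := ⌈t * 2 ^ n⌉₊ with hc
      have hup : P.real ((fun ω => sInf (T ω)) ⁻¹' Iio t) ≤ c / 2 ^ n := by
        rw [← hFP n c hc4]
        refine measureReal_mono ?_
        rw [hset]
        refine iUnion_subset fun m => iUnion_subset fun j => iUnion_subset fun h => ?_
        exact hcmp _ _ _ _ (h.le.trans ((le_div_iff₀ hp).2 hc2))
      have hcast : ((c - 1 : ℕ) : ℝ) = c - 1 := by rw [Nat.cast_sub hc3]; simp
      have hlow : ((c - 1 : ℕ) : ℝ) / 2 ^ n ≤ P.real ((fun ω => sInf (T ω)) ⁻¹' Iio t) := by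
        rw [← hFP n (c - 1) (by omega)]
        refine measureReal_mono ?_
        intro ω hω
        exact (hlt ω t).2 ⟨n, c - 1, by rw [div_lt_iff₀ hp, hcast]; linarith, hω⟩
      rw [hcast] at hlow
      have e1 : (c : ℝ) / 2 ^ n ≤ t + (1 / 2) ^ n := by
        rw [div_le_iff₀ hp, add_mul, ← mul_pow]; norm_num; linarith
      have e2 : t - (1 / 2) ^ n ≤ ((c : ℝ) - 1) / 2 ^ n := by
        rw [le_div_iff₀ hp, sub_mul, ← mul_pow]; norm_num; linarith
      rw [abs_le]
      constructor <;> linarith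
    have h0 := ge_of_tendsto' (tendsto_pow_atTop_nhds_zero_of_lt_one (r := (1 / 2 : ℝ))
      (by norm_num) (by norm_num)) hb
    have := abs_nonpos_iff.1 h0
    linarith
  have hp : IsProbabilityMeasure (volume.restrict (Ioo (0 : ℝ) 1)) := ⟨by simp⟩
  refine Measure.ext_of_Ici _ _ fun t => ?_
  rw [← compl_Iio, prob_compl_eq_one_sub measurableSet_Iio, prob_compl_eq_one_sub measurableSet_Iio,
    Measure.map_apply hU measurableSet_Iio, Measure.restrict_apply measurableSet_Iio]
  congr 1
  rcases le_or_gt t 0 with h0 | h0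
  · have e1 : (fun ω => sInf (T ω)) ⁻¹' Iio t = ∅ := by
      ext ω
      simpa using h0.trans (le_csInf ⟨1, hT1 ω⟩ (hT0 ω))
    have e2 : Iio t ∩ Ioo (0 : ℝ) 1 = ∅ := by
      ext x; simp; intros; linarith
    rw [e1, e2]; simp
  rcases le_or_gt t 1 with h1 | h1
  · have e2 : Iio t ∩ Ioo (0 : ℝ) 1 = Ioo 0 t := by
      ext x; simp only [Set.mem_inter_iff, mem_Iio, mem_Ioo]
      constructor
      · rintro ⟨a, b, c⟩; exact ⟨b, a⟩
      · rintro ⟨a, b⟩; exact ⟨b, a, by linarith⟩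
    rw [e2, Real.volume_Ioo, sub_zero, ← hval t h0 h1, ofReal_measureReal, hval t h0 h1]
  · have e1 : (fun ω => sInf (T ω)) ⁻¹' Iio t = univ := by
      ext ω
      simpa using (csInf_le ⟨0, hT0 ω⟩ (hT1 ω)).trans_lt h1
    have e2 : Iio t ∩ Ioo (0 : ℝ) 1 = Ioo 0 1 := by
      ext x; simp; intros; linarith
    rw [e1, e2]; simp

/-! ### Strict Chebyshev inequality -/

/-- Strict Chebyshev inequality for nondecreasing functions on `(0, 1)`: integrate
`(f s - f t) * (g s - g t) ≥ 0` over the unit square. The integrand is positive for `s` near `0` and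
`t` near `1`, as neither function is constant. -/
lemma integral_mul_integral_lt_of_monotoneOn {f g : ℝ → ℝ}
    (hf : MonotoneOn f (Ioo 0 1)) (hg : MonotoneOn g (Ioo 0 1))
    (hfi : IntegrableOn f (Ioo 0 1)) (hgi : IntegrableOn g (Ioo 0 1))
    (hfgi : IntegrableOn (fun s => f s * g s) (Ioo 0 1))
    (hf' : ∃ a ∈ Ioo (0 : ℝ) 1, ∃ b ∈ Ioo (0 : ℝ) 1, f a < f b)
    (hg' : ∃ a ∈ Ioo (0 : ℝ) 1, ∃ b ∈ Ioo (0 : ℝ) 1, g a < g b) :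
    (∫ s in Ioo (0 : ℝ) 1, f s) * (∫ s in Ioo (0 : ℝ) 1, g s)
      < ∫ s in Ioo (0 : ℝ) 1, f s * g s := by
  obtain ⟨a, ha, b, hb, hab⟩ := hf'
  obtain ⟨c, hc, d, hd, hcd⟩ := hg'
  have hp : IsProbabilityMeasure (volume.restrict (Ioo (0 : ℝ) 1)) := ⟨by simp⟩
  unfold IntegrableOn at *
  set l := volume.restrict (Ioo (0 : ℝ) 1) with hl
  let h : ℝ × ℝ → ℝ := fun p => (f p.1 - f p.2) * (g p.1 - g p.2)
  have i1 : Integrable (fun p : ℝ × ℝ => f p.1 * g p.1) (l.prod l) := hfgi.comp_fst l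
  have i2 : Integrable (fun p : ℝ × ℝ => f p.2 * g p.2) (l.prod l) := hfgi.comp_snd l
  have i3 : Integrable (fun p : ℝ × ℝ => f p.1 * g p.2) (l.prod l) := hfi.mul_prod hgi
  have i4 : Integrable (fun p : ℝ × ℝ => g p.1 * f p.2) (l.prod l) := hgi.mul_prod hfi
  have hh : h = fun p => (f p.1 * g p.1 + f p.2 * g p.2) - (f p.1 * g p.2 + g p.1 * f p.2) := by
    funext p; simp only [h]; ring
  have hint : ∫ p, h p ∂(l.prod l) = 2 * (∫ s, f s * g s ∂l) - 2 * ((∫ s, f s ∂l) * ∫ s, g s ∂l) := by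
    have e := integral_sub (i1.add i2) (i3.add i4)
    simp only [Pi.add_apply] at e
    rw [hh, e, integral_add i1 i2, integral_add i3 i4,
      integral_fun_fst (fun s => f s * g s), integral_fun_snd (fun s => f s * g s),
      integral_prod_mul, integral_prod_mul]
    simp
    ring
  have hhi : Integrable h (l.prod l) := by rw [hh]; exact (i1.add i2).sub (i3.add i4)
  have hae : ∀ᵐ p ∂(l.prod l), p ∈ Ioo (0 : ℝ) 1 ×ˢ Ioo (0 : ℝ) 1 := by
    rw [hl, Measure.prod_restrict]
    exact ae_restrict_mem (measurableSet_Ioo.prod measurableSet_Ioo)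
  have hnn : 0 ≤ᵐ[l.prod l] h := by
    filter_upwards [hae] with p hp
    rcases le_total p.1 p.2 with hle | hle
    · exact mul_nonneg_of_nonpos_of_nonpos (sub_nonpos.2 (hf hp.1 hp.2 hle))
        (sub_nonpos.2 (hg hp.1 hp.2 hle))
    · exact mul_nonneg (sub_nonneg.2 (hf hp.2 hp.1 hle)) (sub_nonneg.2 (hg hp.2 hp.1 hle))
  have hpos : 0 < ∫ p, h p ∂(l.prod l) := by
    rw [integral_pos_iff_support_of_nonneg_ae hnn hhi]
    have hs0 : 0 < min a c := lt_min ha.1 hc.1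
    have ht1 : max b d < 1 := max_lt hb.2 hd.2
    have hsub : Ioo 0 (min a c) ×ˢ Ioo (max b d) 1 ⊆ Function.support h := by
      rintro ⟨s, t⟩ ⟨⟨hs, hs'⟩, ht', ht⟩
      simp only at hs hs' ht ht'
      rw [lt_min_iff] at hs'
      rw [max_lt_iff] at ht'
      have ms : s ∈ Ioo (0 : ℝ) 1 := ⟨hs, hs'.1.trans ha.2⟩
      have mt : t ∈ Ioo (0 : ℝ) 1 := ⟨hb.1.trans ht'.1, ht⟩
      have k1 : f s < f t := (hf ms ha hs'.1.le).trans_lt (hab.trans_le (hf hb mt ht'.1.le))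
      have k2 : g s < g t := (hg ms hc hs'.2.le).trans_lt (hcd.trans_le (hg hd mt ht'.2.le))
      exact (mul_pos_of_neg_of_neg (sub_neg.2 k1) (sub_neg.2 k2)).ne'
    refine lt_of_lt_of_le ?_ (measure_mono hsub)
    rw [Measure.prod_prod, hl, Measure.restrict_eq_self _ (Ioo_subset_Ioo_right
      ((min_le_left _ _).trans ha.2.le)), Measure.restrict_eq_self _ (Ioo_subset_Ioo_left
      (hb.1.le.trans (le_max_left _ _)))]
    simp only [Real.volume_Ioo]
    exact ENNReal.mul_pos (by simpa using hs0) (by simpa using ht1)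
  linarith

/-! ### Quantile functions -/

section Quantile

variable {P : Measure Ω} [IsProbabilityMeasure P] {X : Ω → ℝ} {q : ℝ → ℝ}

lemma toReal_eq_cdf (hX : Measurable X) (x : ℝ) :
    (P {ω | X ω ≤ x}).toReal = ProbabilityTheory.cdf (P.map X) x := by
  have := Measure.isProbabilityMeasure_map (μ := P) hX.aemeasurable
  rw [ProbabilityTheory.cdf_eq_real, Measure.real, Measure.map_apply hX measurableSet_Iic]
  rfl

lemma bddBelow_level (hX : Measurable X) {s : ℝ} (hs : 0 < s) :
    BddBelow {x : ℝ | s ≤ (P {ω | X ω ≤ x}).toReal} := by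
  obtain ⟨y, hy⟩ := ((ProbabilityTheory.tendsto_cdf_atBot (P.map X)).eventually_lt_const hs).exists
  refine ⟨y, fun x hx => le_of_not_gt fun hlt => ?_⟩
  simp only [mem_ofPred_eq, toReal_eq_cdf hX] at hx
  exact absurd (ProbabilityTheory.monotone_cdf (P.map X) hlt.le) (by linarith)

lemma nonempty_level (hX : Measurable X) {s : ℝ} (hs : s < 1) :
    {x : ℝ | s < (P {ω | X ω ≤ x}).toReal}.Nonempty := by
  obtain ⟨y, hy⟩ := ((ProbabilityTheory.tendsto_cdf_atTop (P.map X)).eventually_const_lt hs).exists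
  exact ⟨y, by simpa only [mem_ofPred_eq, toReal_eq_cdf hX]⟩

lemma level_subset {P : Measure Ω} {X : Ω → ℝ} (s : ℝ) : {x : ℝ | s < (P {ω | X ω ≤ x}).toReal} ⊆
    {x : ℝ | s ≤ (P {ω | X ω ≤ x}).toReal} :=
  fun x (hx : s < (P {ω | X ω ≤ x}).toReal) => show s ≤ (P {ω | X ω ≤ x}).toReal from hx.le

lemma IsQuantile.apply_le (hq : IsQuantile P X q) (hX : Measurable X) {s x : ℝ}
    (hs : s ∈ Ioo (0 : ℝ) 1) (h : s < ProbabilityTheory.cdf (P.map X) x) : q s ≤ x :=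
  (hq s hs).2.trans (csInf_le ((bddBelow_level hX hs.1).mono (level_subset s))
    (by rwa [mem_ofPred_eq, toReal_eq_cdf hX]))

lemma IsQuantile.lt_apply (hq : IsQuantile P X q) (hX : Measurable X) {s x : ℝ}
    (hs : s ∈ Ioo (0 : ℝ) 1) (h : ProbabilityTheory.cdf (P.map X) x < s) : x < q s := by
  have hr := ((ProbabilityTheory.cdf (P.map X)).right_continuous x).mono Ioi_subset_Ici_self
  obtain ⟨y, hy, hxy⟩ := ((hr.eventually_lt_const h).and self_mem_nhdsWithin).exists
  refine lt_of_lt_of_le (mem_Ioi.1 hxy) (le_trans (le_csInf ?_ ?_) (hq s hs).1)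
  · exact (nonempty_level hX hs.2).mono (level_subset s)
  · intro z hz
    simp only [mem_ofPred_eq, toReal_eq_cdf hX] at hz
    refine le_of_not_gt fun hlt => ?_
    exact absurd (ProbabilityTheory.monotone_cdf (P.map X) hlt.le) (by linarith)

lemma IsQuantile.monotoneOn (hq : IsQuantile P X q) (hX : Measurable X) :
    MonotoneOn q (Ioo 0 1) := by
  intro s hs t ht hst
  rcases hst.eq_or_lt with rfl | hlt
  · exact le_rfl
  refine (hq s hs).2.trans ((csInf_le_csInf ?_ ?_ ?_).trans (hq t ht).1)
  · exact (bddBelow_level hX hs.1).mono (level_subset s)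
  · exact (nonempty_level hX ht.2).mono (level_subset t)
  · exact fun z hz => hlt.trans_le hz

lemma IsQuantile.aemeasurable (hq : IsQuantile P X q) (hX : Measurable X) :
    AEMeasurable q (volume.restrict (Ioo 0 1)) :=
  aemeasurable_restrict_of_monotoneOn measurableSet_Ioo (hq.monotoneOn hX)

/-- A quantile function pushes Lebesgue measure on `(0, 1)` forward to the law of `X`: up to the single
point `s = F x`, the conditions `q s ≤ x` and `s < F x` agree, where `F` is the distribution function. -/
lemma IsQuantile.map_eq (hq : IsQuantile P X q) (hX : Measurable X) :
    (volume.restrict (Ioo (0 : ℝ) 1)).map q = P.map X := by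
  have hp : IsProbabilityMeasure (volume.restrict (Ioo (0 : ℝ) 1)) := ⟨by simp⟩
  have := Measure.isProbabilityMeasure_map (μ := P) hX.aemeasurable
  have := Measure.isProbabilityMeasure_map (hq.aemeasurable hX)
  refine Measure.ext_of_Iic _ _ fun x => ?_
  rw [Measure.map_apply_of_aemeasurable (hq.aemeasurable hX) measurableSet_Iic,
    ← ProbabilityTheory.ofReal_cdf]
  set c := ProbabilityTheory.cdf (P.map X) x with hc
  have hc1 : c ≤ 1 := ProbabilityTheory.cdf_le_one _ _
  have hae : q ⁻¹' Iic x =ᵐ[volume.restrict (Ioo (0 : ℝ) 1)] Ioo 0 c := by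
    have hne : ∀ᵐ s ∂volume.restrict (Ioo (0 : ℝ) 1), s ≠ c :=
      ae_restrict_of_ae (Measure.ae_ne volume c)
    filter_upwards [hne, ae_restrict_mem measurableSet_Ioo] with s hsc hs
    apply propext
    change q s ≤ x ↔ s ∈ Ioo 0 c
    rcases lt_or_gt_of_ne hsc with h | h
    · exact iff_of_true (hq.apply_le hX hs h) ⟨hs.1, h⟩
    · exact iff_of_false (not_le.2 (hq.lt_apply hX hs h)) fun h' => absurd h'.2 (not_lt.2 h.le)
  rw [measure_congr hae, Measure.restrict_eq_self _ (Ioo_subset_Ioo_right hc1), Real.volume_Ioo,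
    sub_zero]

lemma IsQuantile.exists_lt (hq : IsQuantile P X q) (hX : Measurable X)
    (hnc : Nonconstant P X) : ∃ a ∈ Ioo (0 : ℝ) 1, ∃ b ∈ Ioo (0 : ℝ) 1, q a < q b := by
  by_contra! hcon
  have hhalf : (1 / 2 : ℝ) ∈ Ioo (0 : ℝ) 1 := by norm_num
  apply hnc (q (1 / 2))
  have h1 : ∀ᵐ y ∂(volume.restrict (Ioo (0 : ℝ) 1)).map q, y = q (1 / 2) := by
    refine (ae_map_iff (hq.aemeasurable hX) (measurableSet_singleton (q (1 / 2)))).2 ?_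
    filter_upwards [ae_restrict_mem measurableSet_Ioo] with s hs
    exact le_antisymm (hcon _ hhalf _ hs) (hcon _ hs _ hhalf)
  rw [hq.map_eq hX] at h1
  exact ae_of_ae_map hX.aemeasurable h1

lemma IsQuantile.integral_eq (hq : IsQuantile P X q) (hX : Measurable X) :
    ∫ s in Ioo (0 : ℝ) 1, q s = ∫ ω, X ω ∂P := by
  rw [← integral_map (hq.aemeasurable hX) (f := fun x : ℝ => x) aestronglyMeasurable_id,
    hq.map_eq hX, integral_map hX.aemeasurable (f := fun x : ℝ => x) aestronglyMeasurable_id]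

lemma IsQuantile.integrableOn (hq : IsQuantile P X q) (hX : Measurable X) (hi : Integrable X P) :
    IntegrableOn q (Ioo 0 1) := by
  have h : Integrable (fun x : ℝ => x) (P.map X) :=
    (integrable_map_measure aestronglyMeasurable_id hX.aemeasurable).2 hi
  rw [← hq.map_eq hX] at h
  exact (integrable_map_measure aestronglyMeasurable_id (hq.aemeasurable hX)).1 h

end Quantile

/-! ### Integrability of the products -/

lemma measurePreserving_one_sub :
    MeasurePreserving (fun s : ℝ => 1 - s) (volume.restrict (Ioo 0 1))
      (volume.restrict (Ioo 0 1)) := by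
  have h := (Measure.measurePreserving_sub_left (volume : Measure ℝ) 1).restrict_preimage
    (measurableSet_Ioo (a := (0 : ℝ)) (b := 1))
  simpa using h

/-- Integrability of a product over the unit interval, with factors distributed like `X ∈ 𝒳` and
`Y ∈ 𝒳*`: transporting the factors to `Ω` along a uniform random variable gives elements of `𝒳` and
`𝒳*` by law invariance, so the pairing makes their product integrable. -/
lemma PairedSpaces.integrableOn_mul {P : Measure Ω} [IsProbabilityMeasure P] (hP : IsAtomless P)
    (pr : PairedSpaces P) {X Y : Ω → ℝ} (hX : X ∈ pr.carrier) (hY : Y ∈ pr.dual) {f g : ℝ → ℝ}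
    (hf : AEMeasurable f (volume.restrict (Ioo 0 1)))
    (hg : AEMeasurable g (volume.restrict (Ioo 0 1)))
    (hfX : (volume.restrict (Ioo (0 : ℝ) 1)).map f = P.map X)
    (hgY : (volume.restrict (Ioo (0 : ℝ) 1)).map g = P.map Y) :
    IntegrableOn (fun s => f s * g s) (Ioo 0 1) := by
  obtain ⟨U, hU, hUl⟩ := hP.exists_uniform
  have hXU : hf.mk f ∘ U ∈ pr.carrier := by
    refine pr.lawinv_carrier X hX _ (hf.measurable_mk.comp hU) ?_
    rw [SameLaw, ← Measure.map_map hf.measurable_mk hU, hUl, ← hfX]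
    exact Measure.map_congr hf.ae_eq_mk.symm
  have hYU : hg.mk g ∘ U ∈ pr.dual := by
    refine pr.lawinv_dual Y hY _ (hg.measurable_mk.comp hU) ?_
    rw [SameLaw, ← Measure.map_map hg.measurable_mk hU, hUl, ← hgY]
    exact Measure.map_congr hg.ae_eq_mk.symm
  have h := pr.mul_int _ hXU _ hYU
  have h' : Integrable (fun s => hf.mk f s * hg.mk g s) (P.map U) :=
    (integrable_map_measure (hf.measurable_mk.mul hg.measurable_mk).aestronglyMeasurable
      hU.aemeasurable).2 h
  rw [hUl] at h'
  refine h'.congr ?_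
  filter_upwards [hf.ae_eq_mk, hg.ae_eq_mk] with s h1 h2
  rw [h1, h2]

/-- strict Fréchet-Hoeffding bounds for nonconstant `X ∈ 𝒳`, `Y ∈ 𝒳*`:
`∫ q_X(1-s) q_Y(s) ds < E[X]·E[Y] < ∫ q_X(s) q_Y(s) ds`. -/
theorem strict_frechet_hoeffding
    (P : Measure Ω) [IsProbabilityMeasure P] (hP : IsAtomless P)
    (pr : PairedSpaces P)
    (X : Ω → ℝ) (hX : X ∈ pr.carrier) (Y : Ω → ℝ) (hY : Y ∈ pr.dual)
    (hXnc : Nonconstant P X) (hYnc : Nonconstant P Y)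
    (qX qY : ℝ → ℝ) (hqX : IsQuantile P X qX) (hqY : IsQuantile P Y qY) :
    (∫ s in Set.Ioo (0:ℝ) 1, qX (1 - s) * qY s) < (∫ ω, X ω ∂P) * (∫ ω, Y ω ∂P) ∧
    (∫ ω, X ω ∂P) * (∫ ω, Y ω ∂P) < ∫ s in Set.Ioo (0:ℝ) 1, qX s * qY s := by
  have hXm := pr.meas_carrier X hX
  have hYm := pr.meas_dual Y hY
  have hXi := hqX.integrableOn hXm (pr.int_carrier X hX)
  have hYi := hqY.integrableOn hYm (pr.int_dual Y hY)
  have hXmono := hqX.monotoneOn hXm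
  have hYlt := hqY.exists_lt hYm hYnc
  obtain ⟨a, ha, b, hb, hab⟩ := hqX.exists_lt hXm hXnc
  have hrefl : ∀ s ∈ Ioo (0 : ℝ) 1, 1 - s ∈ Ioo (0 : ℝ) 1 := fun s hs =>
    ⟨by linarith [hs.2], by linarith [hs.1]⟩
  have hmp := measurePreserving_one_sub
  have hqm := hqX.aemeasurable hXm
  have hrm : AEMeasurable (fun s => qX (1 - s)) (volume.restrict (Ioo 0 1)) :=
    hqm.comp_quasiMeasurePreserving hmp.quasiMeasurePreserving
  have hrmap : (volume.restrict (Ioo (0 : ℝ) 1)).map (fun s => qX (1 - s)) = P.map X := by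
    have h := AEMeasurable.map_map_of_aemeasurable (μ := volume.restrict (Ioo (0 : ℝ) 1))
      (f := fun s : ℝ => 1 - s) (g := qX) (by rwa [hmp.map_eq]) hmp.measurable.aemeasurable
    rw [hmp.map_eq, hqX.map_eq hXm] at h
    exact h.symm
  have hrint : IntegrableOn (fun s => qX (1 - s)) (Ioo 0 1) :=
    hmp.integrable_comp_of_integrable hXi
  have hrval : ∫ s in Ioo (0 : ℝ) 1, qX (1 - s) = ∫ s in Ioo (0 : ℝ) 1, qX s := by
    have h := integral_map (μ := volume.restrict (Ioo (0 : ℝ) 1)) hmp.measurable.aemeasurable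
      (f := qX) (by rw [hmp.map_eq]; exact hqm.aestronglyMeasurable)
    rw [hmp.map_eq] at h
    exact h.symm
  rw [← hqX.integral_eq hXm, ← hqY.integral_eq hYm]
  constructor
  · -- `s ↦ -q_X(1 - s)` is nondecreasing, so the lower bound is the upper bound for it.
    have h := integral_mul_integral_lt_of_monotoneOn (f := fun s => -qX (1 - s)) (g := qY)
      (fun s hs t ht hst => neg_le_neg (hXmono (hrefl t ht) (hrefl s hs) (by linarith)))
      (hqY.monotoneOn hYm) hrint.neg hYi
      (by
        simp only [neg_mul]
        exact (pr.integrableOn_mul hP hX hY hrm (hqY.aemeasurable hYm) hrmap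
          (hqY.map_eq hYm)).neg)
      ⟨1 - b, hrefl b hb, 1 - a, hrefl a ha, by simpa using hab⟩ hYlt
    simp only [neg_mul, integral_neg, hrval] at h
    linarith
  · exact integral_mul_integral_lt_of_monotoneOn hXmono (hqY.monotoneOn hYm) hXi hYi
      (pr.integrableOn_mul hP hX hY hqm (hqY.aemeasurable hYm) (hqX.map_eq hXm) (hqY.map_eq hYm))
      ⟨a, ha, b, hb, hab⟩ hYlt

end Collapse
end
end

section
/- Let φ : X → (−∞, ∞] be law invariant with dom(φ) containing a real constant. Assume that for some constant x ∈ dom(φ) ∩ ℝ there exist a ∈ ℝ and a nonconstant Z ∈ X such that φ(x + tZ) = φ(x) + a t for all t ∈ ℝ. Then dom(φ*) ⊂ ℝ, i.e. every Y ∈ X* with φ*(Y) < ∞ is P-a.s. constant. In particular, if there exist c ∈ ℝ and Y ∈ X* such that φ(X) ≥ E[XY] + c for all X ∈ X, then Y is P-a.s. constant. -/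
/-!
A Fenchel inequality `E[XY] + c ≤ φ(X)` evaluated along `X = x + t W`, where `W` has the law of `Z`,
reads `x E[Y] + t E[WY] + c ≤ φ(x) + a t` for all real `t`, because `φ` is law invariant. Hence
`E[WY] = a` for *every* rearrangement `W` of `Z` (`integral_eq_of_minorant`).

If `Y` were nonconstant, this would fail (`exists_sameLaw_integral_lt`). Choose sets `A`, `B`, `C`,
`D` of equal positive probability such that `Y` is large on `A` and small on `B`, while `Z` is large
on `C` and small on `D`. Let `W₁` distribute the values of `Z` on `C` over `A` and those on `D` over
`B`, let `W₂` do the opposite, and let both agree elsewhere. They have the law of `Z`, but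
`E[W₁ Y] > E[W₂ Y]`: after centring `Y`, the integrand `(W₁ - W₂)(Y - E[Y])` is nonnegative and it
is positive on `A`.

Such `W₁`, `W₂` exist because a finite atomless measure can be pushed forward to any measure on `ℝ`
of the same mass (`exists_map_eq`). This rests on a continuous increasing family of sets realising
every measure value, extracted from a maximal chain (`exists_increasing_family`).
-/

open MeasureTheory Set List
open scoped ENNReal NNReal

noncomputable section

namespace Collapse

variable {Ω : Type*} [MeasurableSpace Ω]

/-! ### Atomless measures have arbitrary push-forwards on the line -/

/-- In a finite atomless measure space there is an increasing family of measurable sets `E t`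
with `μ (E t) = t` for `t ≤ μ univ`. It comes from a maximal chain for the relation
`A ⊆ B ∧ μ A < μ B`; asking for strictly increasing measure keeps null sets from obstructing the
insertion of new members. -/
theorem exists_increasing_family (μ : Measure Ω) [IsFiniteMeasure μ] (hμ : IsAtomless μ) :
    ∃ E : ℝ≥0∞ → Set Ω, (∀ t ≤ μ univ, MeasurableSet (E t) ∧ μ (E t) = t) ∧
      ∀ t ≤ μ univ, ∀ t' ≤ μ univ, t ≤ t' → E t ⊆ E t' := by
  obtain ⟨C, hCm, hsub, ins⟩ : ∃ C : Set (Set Ω), (∀ G ∈ C, MeasurableSet G) ∧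
      (∀ G ∈ C, ∀ H ∈ C, μ G ≤ μ H → G ⊆ H) ∧
      (∀ E, MeasurableSet E →
        (∀ G ∈ C, G = E ∨ (E ⊆ G ∧ μ E < μ G) ∨ (G ⊆ E ∧ μ G < μ E)) → E ∈ C) := by
    let r : {s : Set Ω // MeasurableSet s} → {s : Set Ω // MeasurableSet s} → Prop :=
      fun A B => A.1 ⊆ B.1 ∧ μ A.1 < μ B.1
    have hM : IsMaxChain r (maxChain r) := maxChain_spec
    refine ⟨Subtype.val '' maxChain r, ?_, ?_, ?_⟩
    · rintro _ ⟨G, -, rfl⟩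
      exact G.2
    · rintro _ ⟨G, hG, rfl⟩ _ ⟨H, hH, rfl⟩ hle
      by_cases hGH : G = H
      · rw [hGH]
      · rcases hM.1 hG hH hGH with h | h
        · exact h.1
        · exact absurd h.2 (not_lt.mpr hle)
    · intro E hE h
      refine ⟨⟨E, hE⟩, ?_, rfl⟩
      have hins : IsChain r (insert ⟨E, hE⟩ (maxChain r)) := by
        refine hM.1.insert fun G hG hne => ?_
        rcases h G.1 ⟨G, hG, rfl⟩ with h | h | h
        · exact absurd (Subtype.ext h.symm) hne
        · exact Or.inl h
        · exact Or.inr h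
      rw [hM.2 hins (subset_insert _ _)]
      exact mem_insert _ _
  have key : ∀ t ≤ μ univ, ∃ E ∈ C, μ E = t := by
    intro t ht
    by_contra! hno
    -- a largest member below level `t`
    obtain ⟨E, hE, hEt, hEmax⟩ : ∃ E ∈ C, μ E < t ∧ ∀ G ∈ C, μ G < t → G = E ∨
        (G ⊆ E ∧ μ G < μ E) := by
      by_contra! hcon
      have hne : (μ '' {G | G ∈ C ∧ μ G < t}).Nonempty := by
        by_contra hemp
        rw [Set.not_nonempty_iff_eq_empty, Set.image_eq_empty] at hemp
        have hbig : ∀ G ∈ C, t < μ G := fun G hG => by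
          refine lt_of_le_of_ne (not_lt.mp fun h => ?_) (hno G hG).symm
          have : G ∈ {G | G ∈ C ∧ μ G < t} := ⟨hG, h⟩
          simp [hemp] at this
        have := hbig ∅ (ins ∅ .empty fun G hG => Or.inr (Or.inl ⟨empty_subset _, by
          simpa using (zero_le (a := t)).trans_lt (hbig G hG)⟩))
        simp at this
      obtain ⟨u, humono, hutend, hu⟩ := exists_seq_tendsto_sSup hne (OrderTop.bddAbove _)
      choose A hA hAu using hu
      have hAmono : Monotone A := fun n m hnm =>
        hsub _ (hA n).1 _ (hA m).1 (by rw [hAu, hAu]; exact humono hnm)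
      have hlim := tendsto_measure_iUnion_atTop (μ := μ) hAmono
      have hval : μ (⋃ n, A n) = sSup (μ '' {G | G ∈ C ∧ μ G < t}) :=
        tendsto_nhds_unique hlim (by simpa [Function.comp_def, hAu] using hutend)
      have hle : μ (⋃ n, A n) ≤ t := by
        rw [hval]
        refine sSup_le ?_
        rintro _ ⟨G, hG, rfl⟩
        exact hG.2.le
      have hlt : ∀ G ∈ C, μ G < t → G ⊆ (⋃ n, A n) ∧ μ G < μ (⋃ n, A n) := by
        intro G hG hGt
        obtain ⟨H, hH, hHt, hHG, h2⟩ := hcon G hG hGt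
        have hGH : μ G < μ H := by
          by_contra hle
          have h1 := hsub _ hH _ hG (not_lt.mp hle)
          exact absurd (h2 h1) (not_le.mpr (lt_of_le_of_ne (not_lt.mp hle) fun he =>
            hHG (Subset.antisymm h1 (hsub _ hG _ hH he.ge))))
        have h3 : μ G < sSup (μ '' {G | G ∈ C ∧ μ G < t}) :=
          hGH.trans_le (le_sSup ⟨H, ⟨hH, hHt⟩, rfl⟩)
        obtain ⟨n, hn⟩ := (hutend.eventually (lt_mem_nhds h3)).exists
        exact ⟨(hsub _ hG _ (hA n).1 (by rw [hAu]; exact hn.le)).trans (subset_iUnion A n),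
          by rw [hval]; exact h3⟩
      have hmem : (⋃ n, A n) ∈ C := by
        refine ins _ (MeasurableSet.iUnion fun n => hCm _ (hA n).1) fun G hG => Or.inr ?_
        rcases lt_or_gt_of_ne (hno G hG) with h | h
        · exact Or.inr (hlt G hG h)
        · exact Or.inl ⟨iUnion_subset fun n => hsub _ (hA n).1 _ hG ((hA n).2.trans h).le,
            hle.trans_lt h⟩
      exact lt_irrefl _ (hlt _ hmem (lt_of_le_of_ne hle (hno _ hmem))).2
    -- a smallest member above level `t`
    obtain ⟨F, hF, hFt, hFmin⟩ : ∃ F ∈ C, t < μ F ∧ ∀ G ∈ C, t < μ G → G = F ∨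
        (F ⊆ G ∧ μ F < μ G) := by
      by_contra! hcon
      have hne : (μ '' {G | G ∈ C ∧ t < μ G}).Nonempty := by
        by_contra hemp
        rw [Set.not_nonempty_iff_eq_empty, Set.image_eq_empty] at hemp
        have hsmall : ∀ G ∈ C, μ G < t := fun G hG => by
          refine lt_of_le_of_ne (not_lt.mp fun h => ?_) (hno G hG)
          have : G ∈ {G | G ∈ C ∧ t < μ G} := ⟨hG, h⟩
          simp [hemp] at this
        have := hsmall univ (ins univ .univ fun G hG => Or.inr (Or.inr ⟨subset_univ _,
          (hsmall G hG).trans_le ht⟩))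
        exact absurd ht (not_le.mpr this)
      obtain ⟨u, humono, hutend, hu⟩ := exists_seq_tendsto_sInf hne (OrderBot.bddBelow _)
      choose A hA hAu using hu
      have hAanti : Antitone A := fun n m hnm =>
        hsub _ (hA m).1 _ (hA n).1 (by rw [hAu, hAu]; exact humono hnm)
      have hlim := tendsto_measure_iInter_atTop (μ := μ)
        (fun n => (hCm _ (hA n).1).nullMeasurableSet) hAanti ⟨0, measure_ne_top _ _⟩
      have hval : μ (⋂ n, A n) = sInf (μ '' {G | G ∈ C ∧ t < μ G}) :=
        tendsto_nhds_unique hlim (by simpa [Function.comp_def, hAu] using hutend)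
      have hle : t ≤ μ (⋂ n, A n) := by
        rw [hval]
        refine le_sInf ?_
        rintro _ ⟨G, hG, rfl⟩
        exact hG.2.le
      have hlt : ∀ G ∈ C, t < μ G → (⋂ n, A n) ⊆ G ∧ μ (⋂ n, A n) < μ G := by
        intro G hG hGt
        obtain ⟨H, hH, hHt, hHG, h2⟩ := hcon G hG hGt
        have hGH : μ H < μ G := by
          by_contra hle
          have h1 := hsub _ hG _ hH (not_lt.mp hle)
          exact absurd (h2 h1) (not_le.mpr (lt_of_le_of_ne (not_lt.mp hle) fun he =>
            hHG (Subset.antisymm (hsub _ hH _ hG he.ge) h1)))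
        have h3 : sInf (μ '' {G | G ∈ C ∧ t < μ G}) < μ G :=
          lt_of_le_of_lt (sInf_le ⟨H, ⟨hH, hHt⟩, rfl⟩) hGH
        obtain ⟨n, hn⟩ := (hutend.eventually (gt_mem_nhds h3)).exists
        exact ⟨(iInter_subset A n).trans (hsub _ (hA n).1 _ hG (by rw [hAu]; exact hn.le)),
          by rw [hval]; exact h3⟩
      have hmem : (⋂ n, A n) ∈ C := by
        refine ins _ (MeasurableSet.iInter fun n => hCm _ (hA n).1) fun G hG => Or.inr ?_
        rcases lt_or_gt_of_ne (hno G hG) with h | h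
        · exact Or.inr ⟨subset_iInter fun n => hsub _ hG _ (hA n).1 (h.trans (hA n).2).le,
            h.trans_le hle⟩
        · exact Or.inl (hlt G hG h)
      exact lt_irrefl _ (hlt _ hmem (lt_of_le_of_ne hle (hno _ hmem).symm)).2
    -- atomlessness gives a set strictly between the two, contradicting maximality
    have hEF : E ⊆ F := hsub _ hE _ hF (hEt.trans hFt).le
    have hdiff : μ (F \ E) = μ F - μ E :=
      measure_sdiff hEF (hCm E hE).nullMeasurableSet (measure_ne_top _ _)
    obtain ⟨B, hBm, hBs, hB0, hB1⟩ := hμ (F \ E) ((hCm F hF).diff (hCm E hE))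
      (by rw [hdiff]; exact tsub_pos_of_lt (hEt.trans hFt))
    have hdisj : Disjoint E B := (Set.disjoint_sdiff_right (s := E) (t := F)).mono_right hBs
    have hEB : μ (E ∪ B) = μ E + μ B := measure_union hdisj hBm
    have h1 : μ E < μ (E ∪ B) := by
      rw [hEB]
      exact ENNReal.lt_add_right (measure_ne_top _ _) hB0.ne'
    have h2 : μ (E ∪ B) < μ F := by
      rw [hEB, ← add_tsub_cancel_of_le (hEt.trans hFt).le, ← hdiff]
      exact ENNReal.add_lt_add_left (measure_ne_top _ _) hB1
    have hBF : E ∪ B ⊆ F := union_subset hEF (hBs.trans sdiff_subset)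
    have hmem : E ∪ B ∈ C := by
      refine ins _ ((hCm E hE).union hBm) fun G hG => Or.inr ?_
      rcases lt_or_gt_of_ne (hno G hG) with h | h
      · refine Or.inr ?_
        rcases hEmax G hG h with rfl | h
        · exact ⟨subset_union_left, h1⟩
        · exact ⟨h.1.trans subset_union_left, h.2.trans h1⟩
      · refine Or.inl ?_
        rcases hFmin G hG h with rfl | h
        · exact ⟨hBF, h2⟩
        · exact ⟨hBF.trans h.1, h2.trans h.2⟩
    rcases lt_or_gt_of_ne (hno _ hmem) with h | h
    · rcases hEmax _ hmem h with h' | h'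
      · rw [h'] at h1
        exact lt_irrefl _ h1
      · exact lt_asymm h1 h'.2
    · rcases hFmin _ hmem h with h' | h'
      · rw [h'] at h2
        exact lt_irrefl _ h2
      · exact lt_asymm h2 h'.2
  choose! E hEC hE using key
  exact ⟨E, fun t ht => ⟨hCm _ (hEC t ht), hE t ht⟩, fun t ht t' ht' h =>
    hsub _ (hEC t ht) _ (hEC t' ht') (by rw [hE t ht, hE t' ht']; exact h)⟩

/-- A finite atomless measure can be pushed forward to any measure on `ℝ` of the same mass: the
generalised inverse of the distribution function is read off an increasing family of sets. -/
theorem exists_map_eq (μ : Measure Ω) [IsFiniteMeasure μ] (hμ : IsAtomless μ)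
    (ν : Measure ℝ) [IsFiniteMeasure ν] (hν : ν univ = μ univ) :
    ∃ f : Ω → ℝ, Measurable f ∧ μ.map f = ν := by
  classical
  obtain ⟨E, hE, hEmono⟩ := exists_increasing_family μ hμ
  let D : ℚ → Set Ω := fun q => E (ν (Iic (q : ℝ)))
  have hle : ∀ q : ℚ, ν (Iic (q : ℝ)) ≤ μ univ := fun q => hν ▸ measure_mono (subset_univ _)
  have hDm : ∀ q, MeasurableSet (D q) := fun q => (hE _ (hle q)).1
  have hDv : ∀ q, μ (D q) = ν (Iic (q : ℝ)) := fun q => (hE _ (hle q)).2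
  have hDmono : Monotone D := fun q q' h => hEmono _ (hle q) _ (hle q')
    (measure_mono (Iic_subset_Iic.mpr (by exact_mod_cast h)))
  let g : Ω → EReal := fun ω => ⨅ q : ℚ, if ω ∈ D q then ((q : ℝ) : EReal) else ⊤
  have hg : Measurable g := Measurable.iInf fun q =>
    Measurable.ite (hDm q) measurable_const measurable_const
  have hglt : ∀ (r : ℝ), {ω | g ω < r} = ⋃ q : {q : ℚ // (q : ℝ) < r}, D q := by
    intro r
    ext ω
    simp only [g, mem_ofPred_eq, iInf_lt_iff, mem_iUnion, Subtype.exists]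
    constructor
    · rintro ⟨q, hq⟩
      by_cases h : ω ∈ D q
      · rw [if_pos h] at hq
        exact ⟨q, by exact_mod_cast hq, h⟩
      · rw [if_neg h] at hq
        exact absurd hq not_top_lt
    · rintro ⟨q, hq, h⟩
      exact ⟨q, by rw [if_pos h]; exact_mod_cast hq⟩
  have hIio : ∀ r : ℝ, Iio r = ⋃ q : {q : ℚ // (q : ℝ) < r}, Iic ((q : ℚ) : ℝ) := by
    intro r
    ext y
    simp only [mem_Iio, mem_iUnion, Subtype.exists, mem_Iic]
    constructor
    · intro h
      obtain ⟨q, h1, h2⟩ := exists_rat_btwn h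
      exact ⟨q, h2, h1.le⟩
    · rintro ⟨q, h1, h2⟩
      exact h2.trans_lt h1
  have hval : ∀ r : ℝ, μ {ω | g ω < r} = ν (Iio r) := by
    intro r
    rw [hglt, hIio, Monotone.measure_iUnion, Monotone.measure_iUnion]
    · simp [hDv]
    · intro a b hab
      exact Iic_subset_Iic.mpr (by exact_mod_cast hab)
    · intro a b hab
      exact hDmono hab
  have hcov : (⋃ n : ℕ, Iio (n : ℝ)) = univ := by
    ext y
    simpa using exists_nat_gt y
  have htop : ∀ᵐ ω ∂μ, g ω ≠ ⊤ := by
    have hmeq : μ (⋃ n : ℕ, {ω | g ω < ((n : ℝ) : EReal)}) = μ univ := by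
      rw [← hν, ← hcov, Monotone.measure_iUnion, Monotone.measure_iUnion]
      · simp only [hval]
      · intro a b hab
        exact Iio_subset_Iio (by exact_mod_cast hab)
      · intro a b hab ω hω
        exact lt_of_lt_of_le (show g ω < ((a : ℝ) : EReal) from hω) (by exact_mod_cast hab)
    have hm : MeasurableSet (⋃ n : ℕ, {ω | g ω < ((n : ℝ) : EReal)}) :=
      MeasurableSet.iUnion fun n => measurableSet_lt hg measurable_const
    have := (ae_eq_univ_iff_measure_eq hm.nullMeasurableSet).mpr hmeq
    filter_upwards [this.mem_iff] with ω hω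
    have hω' : ω ∈ ⋃ n : ℕ, {ω | g ω < ((n : ℝ) : EReal)} := hω.mpr (mem_univ _)
    obtain ⟨n, hn⟩ := mem_iUnion.mp hω'
    exact hn.ne_top
  have hbot : ∀ᵐ ω ∂μ, g ω ≠ ⊥ := by
    have hinter : (⋂ n : ℕ, Iio (-(n : ℝ))) = ∅ := by
      ext y
      simp only [mem_iInter, mem_Iio, mem_empty_iff_false, iff_false, not_forall, not_lt]
      obtain ⟨n, hn⟩ := exists_nat_gt (-y)
      exact ⟨n, by linarith⟩
    have hlim := tendsto_measure_iInter_atTop (μ := ν) (s := fun n : ℕ => Iio (-(n : ℝ)))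
      (fun n => measurableSet_Iio.nullMeasurableSet)
      (fun a b hab => Iio_subset_Iio (neg_le_neg (by exact_mod_cast hab)))
      ⟨0, measure_ne_top _ _⟩
    rw [hinter, measure_empty] at hlim
    have hz : μ {ω | ¬ g ω ≠ ⊥} ≤ 0 := by
      refine ge_of_tendsto' hlim fun n => ?_
      rw [Function.comp_apply, ← hval]
      refine measure_mono fun ω hω => ?_
      have : g ω = ⊥ := not_not.mp hω
      rw [mem_ofPred_eq, this]
      exact EReal.bot_lt_coe _
    exact le_antisymm hz bot_le
  have hf : Measurable fun ω => (g ω).toReal := hg.ereal_toReal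
  refine ⟨fun ω => (g ω).toReal, hf, ?_⟩
  have : IsFiniteMeasure (μ.map fun ω => (g ω).toReal) := Measure.isFiniteMeasure_map _ _
  refine Measure.ext_of_Ici _ _ fun r => ?_
  have hIci : Ici r = (Iio r)ᶜ := by simp
  have hr : (μ.map fun ω => (g ω).toReal) (Iio r) = ν (Iio r) := by
    rw [Measure.map_apply hf measurableSet_Iio, ← hval]
    refine measure_congr ?_
    filter_upwards [htop, hbot] with ω h1 h2
    refine propext ?_
    change (g ω).toReal < r ↔ g ω < r
    conv_rhs => rw [← EReal.coe_toReal h1 h2]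
    exact EReal.coe_lt_coe_iff.symm
  rw [hIci, measure_compl measurableSet_Iio (measure_ne_top _ _),
    measure_compl measurableSet_Iio (measure_ne_top _ _), hr, hν,
    Measure.map_apply hf .univ, preimage_univ]

theorem IsAtomless.restrict {P : Measure Ω} (hP : IsAtomless P) {S : Set Ω}
    (hS : MeasurableSet S) : IsAtomless (P.restrict S) := by
  intro A hA hpos
  rw [Measure.restrict_apply hA] at hpos
  obtain ⟨B, hB, hBs, h0, h1⟩ := hP _ (hA.inter hS) hpos
  have hBS : B ∩ S = B := inter_eq_left.mpr (hBs.trans inter_subset_right)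
  refine ⟨B, hB, hBs.trans inter_subset_left, ?_, ?_⟩
  · rwa [Measure.restrict_apply hB, hBS]
  · rwa [Measure.restrict_apply hB, Measure.restrict_apply hA, hBS]

theorem exists_subset_measure_eq {P : Measure Ω} [IsFiniteMeasure P] (hP : IsAtomless P)
    {A : Set Ω} (hA : MeasurableSet A) {ε : ℝ≥0∞} (hε : ε ≤ P A) :
    ∃ B ⊆ A, MeasurableSet B ∧ P B = ε := by
  obtain ⟨E, hE, -⟩ := exists_increasing_family _ (hP.restrict hA)
  obtain ⟨h1, h2⟩ := hE ε (by simpa using hε)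
  exact ⟨E ε ∩ A, inter_subset_right, h1.inter hA, (Measure.restrict_apply h1).symm.trans h2⟩

/-! ### Nonconstant variables on both sides of the mean -/

/-- A nonconstant integrable variable lies below some level strictly less than its mean with
positive probability. -/
theorem exists_lt_integral (P : Measure Ω) [IsProbabilityMeasure P] {Z : Ω → ℝ}
    (hZ : Integrable Z P) (hnc : Nonconstant P Z) :
    ∃ u < ∫ ω, Z ω ∂P, 0 < P {ω | Z ω ≤ u} := by
  by_contra! h
  have hge : ∀ᵐ ω ∂P, ∫ ω, Z ω ∂P ≤ Z ω := by
    have hall : ∀ᵐ ω ∂P, ∀ q : ℚ, (q : ℝ) < ∫ ω, Z ω ∂P → (q : ℝ) < Z ω := by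
      refine ae_all_iff.mpr fun q => ?_
      by_cases hq : (q : ℝ) < ∫ ω, Z ω ∂P
      · have h0 : P {ω | Z ω ≤ q} = 0 := le_antisymm (h q hq) bot_le
        filter_upwards [measure_eq_zero_iff_ae_notMem.mp h0] with ω hω _
        exact not_le.mp hω
      · exact Filter.Eventually.of_forall fun ω h' => absurd h' hq
    filter_upwards [hall] with ω hω
    by_contra hlt
    obtain ⟨q, h1, h2⟩ := exists_rat_btwn (not_le.mp hlt)
    exact lt_asymm h1 (hω q h2)
  have hint : Integrable (fun ω => Z ω - ∫ ω, Z ω ∂P) P := hZ.sub (integrable_const _)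
  have h0 : ∫ ω, (Z ω - ∫ ω, Z ω ∂P) ∂P = 0 := by
    rw [integral_sub hZ (integrable_const _)]
    simp
  have hae := (integral_eq_zero_iff_of_nonneg_ae
    (by filter_upwards [hge] with ω hω using sub_nonneg.mpr hω) hint).mp h0
  refine hnc (∫ ω, Z ω ∂P) ?_
  filter_upwards [hae] with ω hω
  exact sub_eq_zero.mp hω

theorem exists_lt_integral_lt (P : Measure Ω) [IsProbabilityMeasure P] {Z : Ω → ℝ}
    (hZ : Integrable Z P) (hnc : Nonconstant P Z) :
    ∃ u v, u < ∫ ω, Z ω ∂P ∧ ∫ ω, Z ω ∂P < v ∧ 0 < P {ω | Z ω ≤ u} ∧ 0 < P {ω | v ≤ Z ω} := by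
  obtain ⟨u, hu, hu'⟩ := exists_lt_integral P hZ hnc
  obtain ⟨v, hv, hv'⟩ := exists_lt_integral P (Z := fun ω => -Z ω) hZ.neg fun c hc =>
    hnc (-c) (by filter_upwards [hc] with ω hω; linarith)
  rw [integral_neg] at hv
  refine ⟨u, -v, hu, by linarith, hu', ?_⟩
  convert hv' using 4
  exact ⟨fun h => by linarith, fun h => by linarith⟩

/-! ### Rearrangements with different covariance -/

open Classical in
/-- The function equal to `f₁` on `A`, to `f₂` on `B \ A` and to `f₃` elsewhere. -/
def glue (A B : Set Ω) (f₁ f₂ f₃ : Ω → ℝ) : Ω → ℝ :=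
  A.piecewise f₁ (B.piecewise f₂ f₃)

theorem glue_left {α : Type*} {A B : Set α} (f₁ f₂ f₃ : α → ℝ) {ω : α} (ha : ω ∈ A) :
    glue A B f₁ f₂ f₃ ω = f₁ ω := by
  simp [glue, ha]

theorem glue_right {α : Type*} {A B : Set α} (f₁ f₂ f₃ : α → ℝ) {ω : α} (ha : ω ∉ A) (hb : ω ∈ B) :
    glue A B f₁ f₂ f₃ ω = f₂ ω := by
  simp [glue, ha, hb]

theorem glue_off {α : Type*} {A B : Set α} (f₁ f₂ f₃ : α → ℝ) {ω : α} (ha : ω ∉ A) (hb : ω ∉ B) :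
    glue A B f₁ f₂ f₃ ω = f₃ ω := by
  simp [glue, ha, hb]

theorem measurable_glue {A B : Set Ω} (hA : MeasurableSet A) (hB : MeasurableSet B)
    {f₁ f₂ f₃ : Ω → ℝ} (h₁ : Measurable f₁) (h₂ : Measurable f₂) (h₃ : Measurable f₃) :
    Measurable (glue A B f₁ f₂ f₃) :=
  h₁.piecewise hA (h₂.piecewise hB h₃)

theorem map_glue (P : Measure Ω) {A B : Set Ω} (hA : MeasurableSet A) (hB : MeasurableSet B)
    (hAB : Disjoint A B) {f₁ f₂ f₃ : Ω → ℝ} (h₁ : Measurable f₁) (h₂ : Measurable f₂)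
    (h₃ : Measurable f₃) :
    P.map (glue A B f₁ f₂ f₃) =
      (P.restrict A).map f₁ + (P.restrict B).map f₂ + (P.restrict (A ∪ B)ᶜ).map f₃ := by
  ext S hS
  have hg := measurable_glue hA hB h₁ h₂ h₃
  simp only [Measure.add_apply]
  rw [Measure.map_apply hg hS, Measure.map_apply h₁ hS, Measure.map_apply h₂ hS,
    Measure.map_apply h₃ hS, Measure.restrict_apply (h₁ hS), Measure.restrict_apply (h₂ hS),
    Measure.restrict_apply (h₃ hS), ← measure_inter_add_sdiff _ hA,
    ← measure_inter_add_sdiff (_ \ A) hB, add_assoc]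
  have hdis : ∀ ω, ω ∈ B → ω ∉ A := fun ω hb ha => Set.disjoint_left.mp hAB ha hb
  congr 2
  · ext ω
    simp only [Set.mem_inter_iff, mem_preimage]
    refine and_congr_left fun h => ?_
    rw [glue_left _ _ _ h]
  · congr 1
    ext ω
    simp only [Set.mem_inter_iff, mem_preimage, mem_sdiff]
    constructor
    · rintro ⟨⟨h, ha⟩, hb⟩
      rw [glue_right _ _ _ ha hb] at h
      exact ⟨h, hb⟩
    · rintro ⟨h, hb⟩
      refine ⟨⟨?_, hdis ω hb⟩, hb⟩
      rwa [glue_right _ _ _ (hdis ω hb) hb]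
  · congr 1
    ext ω
    simp only [Set.mem_inter_iff, mem_preimage, mem_sdiff, mem_compl_iff, mem_union, not_or]
    constructor
    · rintro ⟨⟨h, ha⟩, hb⟩
      rw [glue_off _ _ _ ha hb] at h
      exact ⟨h, ha, hb⟩
    · rintro ⟨h, ha, hb⟩
      refine ⟨⟨?_, ha⟩, hb⟩
      rwa [glue_off _ _ _ ha hb]

theorem measure_compl_union_of_eq (P : Measure Ω) [IsProbabilityMeasure P] {A B : Set Ω}
    (hA : MeasurableSet A) (hB : MeasurableSet B) (hAB : Disjoint A B) {ε : ℝ≥0∞}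
    (hAε : P A = ε) (hBε : P B = ε) : P (A ∪ B)ᶜ = 1 - (ε + ε) := by
  rw [measure_compl (hA.union hB) (measure_ne_top _ _), measure_union hAB hB, hAε, hBε,
    measure_univ]

/-- A property that `Z` has on `C` is inherited a.s. on `A` by any `f` whose law on `A` is the law
of `Z` on `C`. -/
theorem ae_of_map_restrict_eq (P : Measure Ω) {A C : Set Ω} (hA : MeasurableSet A)
    (hC : MeasurableSet C) {f Z : Ω → ℝ} (hf : Measurable f) (hZ : Measurable Z)
    (h : (P.restrict A).map f = (P.restrict C).map Z) {s : Set ℝ} (hs : MeasurableSet s)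
    (hZs : ∀ ω ∈ C, Z ω ∈ s) : ∀ᵐ ω ∂P, ω ∈ A → f ω ∈ s := by
  rw [← ae_restrict_iff' hA]
  have h1 : ∀ᵐ y ∂((P.restrict C).map Z), y ∈ s :=
    (ae_map_iff hZ.aemeasurable hs).mpr ((ae_restrict_iff' hC).mpr (ae_of_all _ hZs))
  rw [← h] at h1
  exact (ae_map_iff hf.aemeasurable hs).mp h1

/-- If `Y` and `Z` are nonconstant, some rearrangements `W₁`, `W₂` of `Z` have different covariance
with `Y`. With `A ⊆ {Y large}`, `B ⊆ {Y small}`, `C ⊆ {Z large}`, `D ⊆ {Z small}` of equal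
probability, `W₁` carries the values of `Z` on `C` to `A` and those on `D` to `B`, while `W₂` does
the opposite, and `W₁ = W₂` off `A ∪ B`. -/
theorem exists_sameLaw_integral_lt (P : Measure Ω) [IsProbabilityMeasure P] (hP : IsAtomless P)
    {Y Z : Ω → ℝ} (hYm : Measurable Y) (hZm : Measurable Z) (hYi : Integrable Y P)
    (hZi : Integrable Z P) (hY : Nonconstant P Y) (hZ : Nonconstant P Z)
    (hprod : ∀ W, Measurable W → SameLaw P W Z → Integrable (fun ω => W ω * Y ω) P) :
    ∃ W₁ W₂ : Ω → ℝ, Measurable W₁ ∧ Measurable W₂ ∧ SameLaw P W₁ Z ∧ SameLaw P W₂ Z ∧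
      ∫ ω, W₂ ω * Y ω ∂P < ∫ ω, W₁ ω * Y ω ∂P := by
  obtain ⟨y₁, y₂, hy₁, hy₂, hB0, hA0⟩ := exists_lt_integral_lt P hYi hY
  obtain ⟨z₁, z₂, hz₁, hz₂, hD0, hC0⟩ := exists_lt_integral_lt P hZi hZ
  set k := ∫ ω, Y ω ∂P with hk
  obtain ⟨ε, hε, hεA, hεB, hεC, hεD⟩ : ∃ ε : ℝ≥0∞, 0 < ε ∧ ε ≤ P {ω | y₂ ≤ Y ω} ∧
      ε ≤ P {ω | Y ω ≤ y₁} ∧ ε ≤ P {ω | z₂ ≤ Z ω} ∧ ε ≤ P {ω | Z ω ≤ z₁} :=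
    ⟨min (min (P {ω | y₂ ≤ Y ω}) (P {ω | Y ω ≤ y₁})) (min (P {ω | z₂ ≤ Z ω}) (P {ω | Z ω ≤ z₁})),
      lt_min (lt_min hA0 hB0) (lt_min hC0 hD0),
      (min_le_left _ _).trans (min_le_left _ _), (min_le_left _ _).trans (min_le_right _ _),
      (min_le_right _ _).trans (min_le_left _ _), (min_le_right _ _).trans (min_le_right _ _)⟩
  obtain ⟨A, hAs, hA, hPA⟩ := exists_subset_measure_eq hP (measurableSet_le measurable_const hYm) hεA
  obtain ⟨B, hBs, hB, hPB⟩ := exists_subset_measure_eq hP (measurableSet_le hYm measurable_const) hεB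
  obtain ⟨C, hCs, hC, hPC⟩ := exists_subset_measure_eq hP (measurableSet_le measurable_const hZm) hεC
  obtain ⟨D, hDs, hD, hPD⟩ := exists_subset_measure_eq hP (measurableSet_le hZm measurable_const) hεD
  have hAB : Disjoint A B := Set.disjoint_left.mpr fun ω ha hb => by
    have h1 : y₂ ≤ Y ω := hAs ha
    have h2 : Y ω ≤ y₁ := hBs hb
    linarith
  have hCD : Disjoint C D := Set.disjoint_left.mpr fun ω hc hd => by
    have h1 : z₂ ≤ Z ω := hCs hc
    have h2 : Z ω ≤ z₁ := hDs hd
    linarith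
  have transfer : ∀ {S T : Set Ω}, MeasurableSet S → P S = P T →
      ∃ f : Ω → ℝ, Measurable f ∧ (P.restrict S).map f = (P.restrict T).map Z := by
    intro S T hS hST
    have : IsFiniteMeasure ((P.restrict T).map Z) := Measure.isFiniteMeasure_map _ _
    refine exists_map_eq _ (hP.restrict hS) _ ?_
    rw [Measure.map_apply hZm .univ]
    simp [hST]
  obtain ⟨f₁, hf₁, hf₁l⟩ := transfer (T := C) hA (hPA.trans hPC.symm)
  obtain ⟨f₂, hf₂, hf₂l⟩ := transfer (T := D) hB (hPB.trans hPD.symm)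
  obtain ⟨g₁, hg₁, hg₁l⟩ := transfer (T := D) hA (hPA.trans hPD.symm)
  obtain ⟨g₂, hg₂, hg₂l⟩ := transfer (T := C) hB (hPB.trans hPC.symm)
  obtain ⟨f₃, hf₃, hf₃l⟩ := transfer (T := (C ∪ D)ᶜ) (hA.union hB).compl (by
    rw [measure_compl_union_of_eq P hA hB hAB hPA hPB,
      measure_compl_union_of_eq P hC hD hCD hPC hPD])
  have hZglue : P.map Z =
      (P.restrict C).map Z + (P.restrict D).map Z + (P.restrict (C ∪ D)ᶜ).map Z := by
    rw [← map_glue P hC hD hCD hZm hZm hZm]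
    simp [glue]
  have hW₁ := measurable_glue hA hB hf₁ hf₂ hf₃
  have hW₂ := measurable_glue hA hB hg₁ hg₂ hf₃
  have hL₁ : SameLaw P (glue A B f₁ f₂ f₃) Z := by
    rw [SameLaw, map_glue P hA hB hAB hf₁ hf₂ hf₃, hZglue, hf₁l, hf₂l, hf₃l]
  have hL₂ : SameLaw P (glue A B g₁ g₂ f₃) Z := by
    rw [SameLaw, map_glue P hA hB hAB hg₁ hg₂ hf₃, hZglue, hg₁l, hg₂l, hf₃l,
      add_comm ((P.restrict D).map Z)]
  refine ⟨_, _, hW₁, hW₂, hL₁, hL₂, ?_⟩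
  have ae₁ := ae_of_map_restrict_eq P hA hC hf₁ hZm hf₁l measurableSet_Ici hCs
  have ae₂ := ae_of_map_restrict_eq P hB hD hf₂ hZm hf₂l measurableSet_Iic hDs
  have ae₃ := ae_of_map_restrict_eq P hA hD hg₁ hZm hg₁l measurableSet_Iic hDs
  have ae₄ := ae_of_map_restrict_eq P hB hC hg₂ hZm hg₂l measurableSet_Ici hCs
  have hi₁ := hprod _ hW₁ hL₁
  have hi₂ := hprod _ hW₂ hL₂
  have hint : ∀ W, Measurable W → SameLaw P W Z → Integrable W P ∧
      ∫ ω, W ω ∂P = ∫ ω, Z ω ∂P := fun W hW hL => by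
    have hid : ProbabilityTheory.IdentDistrib W Z P P := ⟨hW.aemeasurable, hZm.aemeasurable, hL⟩
    exact ⟨hid.integrable_iff.mpr hZi, hid.integral_eq⟩
  obtain ⟨hw₁, he₁⟩ := hint _ hW₁ hL₁
  obtain ⟨hw₂, he₂⟩ := hint _ hW₂ hL₂
  let W₁ := glue A B f₁ f₂ f₃
  let W₂ := glue A B g₁ g₂ f₃
  -- As `W₁` and `W₂` have equal means, `Y` may be centred; the integrand is then nonnegative.
  have hexp : ∀ ω, (W₁ ω - W₂ ω) * (Y ω - k) =
      (W₁ ω * Y ω - W₂ ω * Y ω) - k * (W₁ ω - W₂ ω) := fun ω => by ring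
  have hI : Integrable (fun ω => (W₁ ω - W₂ ω) * (Y ω - k)) P := by
    simp only [hexp]
    exact (hi₁.sub hi₂).sub ((hw₁.sub hw₂).const_mul k)
  have hval : ∫ ω, (W₁ ω - W₂ ω) * (Y ω - k) ∂P =
      ∫ ω, W₁ ω * Y ω ∂P - ∫ ω, W₂ ω * Y ω ∂P := by
    simp only [hexp]
    have hd₁ : Integrable (fun ω => W₁ ω * Y ω - W₂ ω * Y ω) P := hi₁.sub hi₂
    have hd₂ : Integrable (fun ω => k * (W₁ ω - W₂ ω)) P := (hw₁.sub hw₂).const_mul k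
    rw [integral_sub hd₁ hd₂, integral_sub hi₁ hi₂, integral_const_mul, integral_sub hw₁ hw₂,
      he₁, he₂]
    ring
  have hposA : ∀ᵐ ω ∂P, ω ∈ A → 0 < (W₁ ω - W₂ ω) * (Y ω - k) := by
    filter_upwards [ae₁, ae₃] with ω h1 h3 ha
    have h1 : z₂ ≤ f₁ ω := h1 ha
    have h3 : g₁ ω ≤ z₁ := h3 ha
    have hy : y₂ ≤ Y ω := hAs ha
    simp only [W₁, W₂]
    rw [glue_left _ _ _ ha, glue_left _ _ _ ha]
    exact mul_pos (by linarith) (by linarith)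
  have hnonneg : ∀ᵐ ω ∂P, 0 ≤ (W₁ ω - W₂ ω) * (Y ω - k) := by
    filter_upwards [hposA, ae₂, ae₄] with ω hA' h2 h4
    by_cases ha : ω ∈ A
    · exact (hA' ha).le
    by_cases hb : ω ∈ B
    · have h2 : f₂ ω ≤ z₁ := h2 hb
      have h4 : z₂ ≤ g₂ ω := h4 hb
      have hy : Y ω ≤ y₁ := hBs hb
      simp only [W₁, W₂]
      rw [glue_right _ _ _ ha hb, glue_right _ _ _ ha hb]
      exact mul_nonneg_of_nonpos_of_nonpos (by linarith) (by linarith)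
    · simp only [W₁, W₂]
      rw [glue_off _ _ _ ha hb, glue_off _ _ _ ha hb]
      simp
  have hpos : 0 < ∫ ω, (W₁ ω - W₂ ω) * (Y ω - k) ∂P := by
    rw [integral_pos_iff_support_of_nonneg_ae hnonneg hI]
    refine (hPA.symm ▸ hε : 0 < P A).trans_le (measure_mono_ae ?_)
    filter_upwards [hposA] with ω hω ha
    exact (hω ha).ne'
  linarith

/-! ### Linear minorants -/

/-- Affinity along `Z` passes to every rearrangement `W` of `Z` by law invariance. A linear minorant
of `φ` with slope `Y` must then satisfy `E[W Y] = a`, since an affine function of `t ∈ ℝ` that is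
bounded below has slope zero. -/
theorem integral_eq_of_minorant
    (P : Measure Ω) [IsProbabilityMeasure P]
    (pr : PairedSpaces P) (φ : (Ω → ℝ) → EReal)
    (hbot : ∀ X ∈ pr.carrier, φ X ≠ (⊥ : EReal))
    (hlaw : LawInvariantFn P pr.carrier φ)
    (x : ℝ) (hx : φ (fun _ => x) ≠ (⊤ : EReal))
    (a : ℝ) (Z : Ω → ℝ) (hZ : Z ∈ pr.carrier)
    (hlin : ∀ t : ℝ, φ (fun ω => x + t * Z ω) = φ (fun _ => x) + ((a * t : ℝ) : EReal))
    (c : ℝ) (Y : Ω → ℝ) (hY : Y ∈ pr.dual)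
    (hmin : ∀ X ∈ pr.carrier, (((∫ ω, X ω * Y ω ∂P) + c : ℝ) : EReal) ≤ φ X)
    (W : Ω → ℝ) (hW : Measurable W) (hWZ : SameLaw P W Z) : ∫ ω, W ω * Y ω ∂P = a := by
  have hWc := pr.lawinv_carrier Z hZ W hW hWZ
  have hxc : (fun _ : Ω => x) ∈ pr.carrier :=
    pr.linf_carrier _ ⟨measurable_const, |x|, ae_of_all _ fun _ => le_rfl⟩
  lift φ (fun _ => x) to ℝ using ⟨hx, hbot _ hxc⟩ with p hp
  have hbound : ∀ t : ℝ, x * ∫ ω, Y ω ∂P + t * ∫ ω, W ω * Y ω ∂P + c ≤ p + a * t := by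
    intro t
    have hWt := pr.add_carrier _ hxc _ (pr.smul_carrier W hWc t)
    have hZt := pr.add_carrier _ hxc _ (pr.smul_carrier Z hZ t)
    have hsame : SameLaw P (fun ω => x + t * W ω) (fun ω => x + t * Z ω) := by
      have hm : Measurable fun y : ℝ => x + t * y := by fun_prop
      have h1 := Measure.map_map (μ := P) hm hW
      have h2 := Measure.map_map (μ := P) hm (pr.meas_carrier Z hZ)
      rw [hWZ] at h1
      exact h1.symm.trans h2
    have h := hmin _ hWt
    rw [hlaw _ hWt _ hZt hsame, hlin t, ← EReal.coe_add, EReal.coe_le_coe_iff] at h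
    have hexp : ∀ ω, (x + t * W ω) * Y ω = x * Y ω + t * (W ω * Y ω) := fun ω => by ring
    simp only [hexp] at h
    rwa [integral_add ((pr.int_dual Y hY).const_mul x) ((pr.mul_int W hWc Y hY).const_mul t),
      integral_const_mul, integral_const_mul] at h
  by_contra hne
  -- at this `t` the two sides of `hbound` differ by exactly one in the wrong direction
  have h := hbound ((p - c - x * ∫ ω, Y ω ∂P + 1) / (∫ ω, W ω * Y ω ∂P - a))
  have hd : ∫ ω, W ω * Y ω ∂P - a ≠ 0 := sub_ne_zero.mpr hne
  have he := div_mul_cancel₀ (p - c - x * ∫ ω, Y ω ∂P + 1) hd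
  linarith

/-- the general collapse-to-the-mean principle. If a law-invariant
`φ : 𝒳 → (-∞,∞]` is affine along a nonconstant `Z` at some real constant `x ∈ dom φ`,
then `dom(φ*) ⊆ ℝ`; in particular any `Y ∈ 𝒳*` with `E[XY] + c ≤ φ(X)` for all `X`
must be a.s. constant. -/
theorem collapse_general_principle
    (P : Measure Ω) [IsProbabilityMeasure P] (hP : IsAtomless P)
    (pr : PairedSpaces P) (φ : (Ω → ℝ) → EReal)
    (hbot : ∀ X ∈ pr.carrier, φ X ≠ (⊥ : EReal))
    (hlaw : LawInvariantFn P pr.carrier φ)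
    (x : ℝ) (hx : φ (fun _ => x) ≠ (⊤ : EReal))
    (a : ℝ) (Z : Ω → ℝ) (hZ : Z ∈ pr.carrier) (hZnc : Nonconstant P Z)
    (hlin : ∀ t : ℝ, φ (fun ω => x + t * Z ω) = φ (fun _ => x) + ((a * t : ℝ) : EReal)) :
    (∀ Y ∈ pr.dual, conj P pr.carrier φ Y < (⊤ : EReal) →
      ∃ c : ℝ, Y =ᵐ[P] fun _ => c) ∧
    (∀ c : ℝ, ∀ Y ∈ pr.dual,
      (∀ X ∈ pr.carrier, (((∫ ω, X ω * Y ω ∂P) + c : ℝ) : EReal) ≤ φ X) →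
      ∃ k : ℝ, Y =ᵐ[P] fun _ => k) := by
  have second : ∀ c : ℝ, ∀ Y ∈ pr.dual,
      (∀ X ∈ pr.carrier, (((∫ ω, X ω * Y ω ∂P) + c : ℝ) : EReal) ≤ φ X) →
      ∃ k : ℝ, Y =ᵐ[P] fun _ => k := by
    intro c Y hY hmin
    by_contra! hnc
    have heq := integral_eq_of_minorant P pr φ hbot hlaw x hx a Z hZ hlin c Y hY hmin
    obtain ⟨W₁, W₂, h₁, h₂, hl₁, hl₂, hlt⟩ := exists_sameLaw_integral_lt P hP
      (pr.meas_dual Y hY) (pr.meas_carrier Z hZ) (pr.int_dual Y hY) (pr.int_carrier Z hZ)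
      hnc hZnc fun W hW hl => pr.mul_int W (pr.lawinv_carrier Z hZ W hW hl) Y hY
    rw [heq W₁ h₁ hl₁, heq W₂ h₂ hl₂] at hlt
    exact lt_irrefl _ hlt
  refine ⟨fun Y hY hconj => ?_, second⟩
  obtain ⟨m, hm, -⟩ := EReal.lt_iff_exists_real_btwn.mp hconj
  refine second (-m) Y hY fun X hX => ?_
  have hle : ((∫ ω, X ω * Y ω ∂P : ℝ) : EReal) - φ X ≤ m :=
    (le_iSup₂ (f := fun X (_ : X ∈ pr.carrier) =>
      ((∫ ω, X ω * Y ω ∂P : ℝ) : EReal) - φ X) X hX).trans hm.le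
  induction hφ : φ X with
  | bot => exact absurd hφ (hbot X hX)
  | top => exact le_top
  | coe r =>
    rw [hφ, ← EReal.coe_sub, EReal.coe_le_coe_iff] at hle
    rw [EReal.coe_le_coe_iff]
    linarith

end Collapse
end
end
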